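/- arXiv:1601.01650 — 4 statements merged into one kernel-verified Lean document; each statement's English description precedes it below -/
import Mathlib

section
/- For all real α, β > −1, every j ∈ ℕ, every sequence (M_n) of nonnegative reals, and every n ≥ 1, one has the exact identity (Q_n, Q_n)_{S,n} = ‖P_n^{(α,β)}‖² + M_n·((P_n^{(α,β)})^{(j)}(1))² / (1 + M_n K_{n−1}^{(j,j)}(1,1)). -/
open Polynomial Filter

/-- The Jacobi polynomial `P_n^{(α,β)}` as a real polynomial. -/
noncomputable def jacobiP (α β : ℝ) (n : ℕ) : Polynomial ℝ :=
  ∑ k ∈ Finset.range (n + 1),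
    Polynomial.C (Real.Gamma (n + α + 1) / (Real.Gamma ((n : ℝ) - k + 1) * Real.Gamma (α + k + 1)) *
        (Real.Gamma (n + β + 1) / (Real.Gamma ((k : ℝ) + 1) * Real.Gamma ((n : ℝ) - k + β + 1)))) *
      (Polynomial.C (2⁻¹ : ℝ) * (Polynomial.X - 1)) ^ k *
      (Polynomial.C (2⁻¹ : ℝ) * (Polynomial.X + 1)) ^ (n - k)

/-- The squared Jacobi norm `‖P_n^{(α,β)}‖²`. -/
noncomputable def jacobiNormSq (α β : ℝ) (n : ℕ) : ℝ :=
  ∫ x in (-1 : ℝ)..1, (jacobiP α β n).eval x ^ 2 * (1 - x) ^ α * (1 + x) ^ β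

/-- The kernel `K_n^{(j,k)}(x,y)`. -/
noncomputable def kernK (α β : ℝ) (j k n : ℕ) (x y : ℝ) : ℝ :=
  ∑ i ∈ Finset.range (n + 1),
    (Polynomial.derivative^[j] (jacobiP α β i)).eval x *
      (Polynomial.derivative^[k] (jacobiP α β i)).eval y / jacobiNormSq α β i

/-- The kernel `K_n^{(j,0)}(1,·)` as a polynomial. -/
noncomputable def kernKPoly (α β : ℝ) (j n : ℕ) : Polynomial ℝ :=
  ∑ i ∈ Finset.range (n + 1),
    Polynomial.C ((Polynomial.derivative^[j] (jacobiP α β i)).eval 1 / jacobiNormSq α β i) *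
      jacobiP α β i

/-- The varying Sobolev inner product `(f,g)_{S,n}` with mass `m`. -/
noncomputable def sobInner (α β : ℝ) (j : ℕ) (m : ℝ) (f g : Polynomial ℝ) : ℝ :=
  (∫ x in (-1 : ℝ)..1, f.eval x * g.eval x * (1 - x) ^ α * (1 + x) ^ β) +
    m * (Polynomial.derivative^[j] f).eval 1 * (Polynomial.derivative^[j] g).eval 1

/-- The Jacobi–Sobolev orthogonal polynomial `Q_n`. -/
noncomputable def sobQ (α β : ℝ) (j : ℕ) (Ms : ℕ → ℝ) (n : ℕ) : Polynomial ℝ :=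
  jacobiP α β n -
    Polynomial.C (Ms n * (Polynomial.derivative^[j] (jacobiP α β n)).eval 1 /
        (1 + Ms n * kernK α β j j (n - 1) 1 1)) *
      kernKPoly α β j (n - 1)

open MeasureTheory in
lemma beta01_integrable {a b : ℝ} (ha : -1 < a) (hb : -1 < b) :
    IntervalIntegrable (fun x : ℝ => x ^ a * (1 - x) ^ b) volume 0 1 := by
  have h := Complex.betaIntegral_convergent (u := ((a + 1 : ℝ) : ℂ)) (v := ((b + 1 : ℝ) : ℂ))
    (by rw [Complex.ofReal_re]; linarith) (by rw [Complex.ofReal_re]; linarith)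
  rw [intervalIntegrable_iff_integrableOn_Ioo_of_le zero_le_one] at h ⊢
  have h2 := h.re
  refine MeasureTheory.IntegrableOn.congr_fun h2 ?_ measurableSet_Ioo
  intro x hx
  have h1 : ((x : ℂ)) ^ (((a + 1 : ℝ) : ℂ) - 1) = ((x ^ a : ℝ) : ℂ) := by
    rw [Complex.ofReal_cpow hx.1.le]; congr 1; push_cast; ring
  have h3 : ((1 : ℂ) - x) ^ (((b + 1 : ℝ) : ℂ) - 1) = (((1 - x) ^ b : ℝ) : ℂ) := by
    rw [Complex.ofReal_cpow (by linarith [hx.2])]; push_cast; congr 1; ring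
  simp only [h1, h3]
  rw [← Complex.ofReal_mul]
  exact Complex.ofReal_re _

open MeasureTheory in
lemma beta01_integral {a b : ℝ} (ha : -1 < a) (hb : -1 < b) :
    ∫ x in (0 : ℝ)..1, x ^ a * (1 - x) ^ b =
      Real.Gamma (a + 1) * Real.Gamma (b + 1) / Real.Gamma (a + b + 2) := by
  have h := ProbabilityTheory.beta_eq_betaIntegralReal (a + 1) (b + 1) (by linarith) (by linarith)
  have h4 : Complex.betaIntegral ((a + 1 : ℝ) : ℂ) ((b + 1 : ℝ) : ℂ) =
      ((∫ x in (0 : ℝ)..1, x ^ a * (1 - x) ^ b : ℝ) : ℂ) := by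
    rw [Complex.betaIntegral, ← intervalIntegral.integral_ofReal]
    apply intervalIntegral.integral_congr
    intro x hx
    rw [Set.uIcc_of_le zero_le_one] at hx
    have h1 : ((x : ℂ)) ^ (((a + 1 : ℝ) : ℂ) - 1) = ((x ^ a : ℝ) : ℂ) := by
      rw [Complex.ofReal_cpow hx.1]; congr 1; push_cast; ring
    have h3 : ((1 : ℂ) - x) ^ (((b + 1 : ℝ) : ℂ) - 1) = (((1 - x) ^ b : ℝ) : ℂ) := by
      rw [Complex.ofReal_cpow (by linarith [hx.2])]; push_cast; congr 1; ring
    simp only [h1, h3]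
    push_cast
    rfl
  rw [h4, Complex.ofReal_re, ProbabilityTheory.beta] at h
  rw [← h]
  congr 2
  ring

lemma half_integral {a b : ℝ} (ha : -1 < a) (hb : -1 < b) :
    ∫ x in (-1 : ℝ)..1, ((1 - x) / 2) ^ a * ((1 + x) / 2) ^ b =
      2 * (Real.Gamma (a + 1) * Real.Gamma (b + 1) / Real.Gamma (a + b + 2)) := by
  rw [← beta01_integral ha hb]
  have h := intervalIntegral.integral_comp_sub_mul (a := 0) (b := 1)
    (fun x : ℝ => ((1 - x) / 2) ^ a * ((1 + x) / 2) ^ b) (two_ne_zero (α := ℝ)) 1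
  have e1 : (1 : ℝ) - 2 * 1 = -1 := by norm_num
  have e2 : (1 : ℝ) - 2 * 0 = 1 := by norm_num
  rw [e1, e2, smul_eq_mul] at h
  have e3 : ∀ x : ℝ, ((1 - (1 - 2 * x)) / 2) ^ a * ((1 + (1 - 2 * x)) / 2) ^ b
      = x ^ a * (1 - x) ^ b := by
    intro x; congr 2 <;> ring
  simp only [e3] at h
  rw [h]; ring

open MeasureTheory in
lemma weight_integrable {a b : ℝ} (ha : -1 < a) (hb : -1 < b) :
    IntervalIntegrable (fun x : ℝ => (1 - x) ^ a * (1 + x) ^ b) volume (-1) 1 := by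
  have h := ((beta01_integrable ha hb).comp_mul_left (c := 2⁻¹)).comp_sub_left 1
  have h2 := (h.const_mul ((2 : ℝ) ^ a * 2 ^ b)).symm
  norm_num at h2
  rw [intervalIntegrable_iff_integrableOn_Ioo_of_le (by norm_num)] at h2 ⊢
  refine MeasureTheory.IntegrableOn.congr_fun h2 ?_ measurableSet_Ioo
  intro x hx
  have e1 : (1 - x) ^ a = 2 ^ a * (1 / 2 * (1 - x)) ^ a := by
    rw [← Real.mul_rpow (by norm_num) (by linarith [hx.2])]; congr 1; ring
  have e2 : (1 + x) ^ b = 2 ^ b * (1 - 1 / 2 * (1 - x)) ^ b := by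
    rw [← Real.mul_rpow (by norm_num) (by linarith [hx.1])]; congr 1; ring
  simp only [e1, e2]
  ring

lemma poly_integrable {a b : ℝ} (ha : -1 < a) (hb : -1 < b) (p : Polynomial ℝ) :
    IntervalIntegrable (fun x : ℝ => p.eval x * ((1 - x) ^ a * (1 + x) ^ b))
      MeasureTheory.volume (-1) 1 :=
  (weight_integrable ha hb).continuousOn_mul p.continuous.continuousOn

/-- The integration functional against the Jacobi weight. -/
noncomputable def jacL (a b : ℝ) (p : Polynomial ℝ) : ℝ :=
  ∫ x in (-1 : ℝ)..1, p.eval x * ((1 - x) ^ a * (1 + x) ^ b)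

lemma jacL_add {a b : ℝ} (ha : -1 < a) (hb : -1 < b) (p q : Polynomial ℝ) :
    jacL a b (p + q) = jacL a b p + jacL a b q := by
  unfold jacL
  rw [← intervalIntegral.integral_add (poly_integrable ha hb p) (poly_integrable ha hb q)]
  congr 1; ext x; rw [eval_add]; ring

lemma jacL_smul {a b : ℝ} (c : ℝ) (p : Polynomial ℝ) :
    jacL a b (C c * p) = c * jacL a b p := by
  unfold jacL
  rw [← intervalIntegral.integral_const_mul]
  congr 1; ext x; rw [eval_mul, eval_C]; ring

/-- The functional as a linear map. -/
noncomputable def jacLin {a b : ℝ} (ha : -1 < a) (hb : -1 < b) : Polynomial ℝ →ₗ[ℝ] ℝ where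
  toFun := jacL a b
  map_add' := jacL_add ha hb
  map_smul' c p := by rw [smul_eq_C_mul, jacL_smul]; rfl

lemma jacL_sum {a b : ℝ} (ha : -1 < a) (hb : -1 < b) (s : Finset ℕ) (f : ℕ → Polynomial ℝ) :
    jacL a b (∑ i ∈ s, f i) = ∑ i ∈ s, jacL a b (f i) :=
  map_sum (jacLin ha hb) f s

lemma jacL_sub {a b : ℝ} (ha : -1 < a) (hb : -1 < b) (p q : Polynomial ℝ) :
    jacL a b (p - q) = jacL a b p - jacL a b q :=
  map_sub (jacLin ha hb) p q

lemma jacL_moment {a b : ℝ} (ha : -1 < a) (hb : -1 < b) (k l m : ℕ) :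
    jacL a b ((C (2⁻¹ : ℝ) * (X - 1)) ^ k * (C (2⁻¹ : ℝ) * (X + 1)) ^ l * (X - C 1) ^ m) =
      (-1) ^ k * ((2 ^ a * 2 ^ b * (-2) ^ m * 2) *
        (Real.Gamma (a + k + m + 1) * Real.Gamma (b + l + 1) /
          Real.Gamma (a + b + (k + l : ℕ) + m + 2))) := by
  have hk : (0 : ℝ) ≤ k := k.cast_nonneg
  have hl : (0 : ℝ) ≤ l := l.cast_nonneg
  have hm : (0 : ℝ) ≤ m := m.cast_nonneg
  have h := half_integral (a := a + k + m) (b := b + l) (by linarith) (by linarith)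
  have e : a + k + m + (b + l) + 2 = a + b + (k + l : ℕ) + m + 2 := by push_cast; ring
  rw [e] at h
  have : jacL a b ((C (2⁻¹ : ℝ) * (X - 1)) ^ k * (C (2⁻¹ : ℝ) * (X + 1)) ^ l * (X - C 1) ^ m) =
      (-1) ^ k * (2 ^ a * 2 ^ b * (-2) ^ m) *
        ∫ x in (-1 : ℝ)..1, ((1 - x) / 2) ^ (a + k + m) * ((1 + x) / 2) ^ (b + l) := by
    unfold jacL
    rw [← intervalIntegral.integral_const_mul, intervalIntegral.integral_of_le (by norm_num),
      intervalIntegral.integral_of_le (by norm_num), MeasureTheory.integral_Ioc_eq_integral_Ioo,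
      MeasureTheory.integral_Ioc_eq_integral_Ioo]
    apply MeasureTheory.setIntegral_congr_fun measurableSet_Ioo
    intro x hx
    have p1 : 0 < (1 - x) / 2 := by linarith [hx.2]
    have p2 : 0 < (1 + x) / 2 := by linarith [hx.1]
    have e1 : (1 - x) ^ a = 2 ^ a * ((1 - x) / 2) ^ a := by
      rw [← Real.mul_rpow (by norm_num) p1.le]; congr 1; ring
    have e2 : (1 + x) ^ b = 2 ^ b * ((1 + x) / 2) ^ b := by
      rw [← Real.mul_rpow (by norm_num) p2.le]; congr 1; ring
    have e3 : 2⁻¹ * (x - 1) = (-1) * ((1 - x) / 2) := by ring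
    have e4 : 2⁻¹ * (x + 1) = (1 + x) / 2 := by ring
    have e5 : x - 1 = (-2) * ((1 - x) / 2) := by ring
    simp only [eval_mul, eval_pow, eval_C, eval_sub, eval_add, eval_X, eval_one]
    rw [e1, e2, e3, e4, e5, Real.rpow_add_natCast p1.ne', Real.rpow_add_natCast p1.ne',
      Real.rpow_add_natCast p2.ne', mul_pow (-1 : ℝ), mul_pow (-2 : ℝ)]
    ring
  rw [this, h]
  ring

lemma Gamma_asc (z : ℝ) (hz : 0 < z) (m : ℕ) :
    Real.Gamma (z + m) = (ascPochhammer ℝ m).eval z * Real.Gamma z := by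
  induction m with
  | zero => simp
  | succ m ih =>
    have : (0 : ℝ) ≤ m := m.cast_nonneg
    rw [ascPochhammer_succ_eval, Nat.cast_succ, ← add_assoc, Real.Gamma_add_one (by linarith), ih]
    ring

lemma alt_sum (c : ℝ) {m n : ℕ} (h : m < n) :
    ∑ k ∈ Finset.range (n + 1), (-1 : ℝ) ^ k * n.choose k * (ascPochhammer ℝ m).eval (c + k) = 0 := by
  have h1 := Polynomial.fwdDiff_iter_eq_zero_of_degree_lt (P := ascPochhammer ℝ m) (n := n)
    (by rw [ascPochhammer_natDegree]; exact h)
  have h2 := congrFun h1 c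
  rw [fwdDiff_iter_eq_sum_shift] at h2
  have h3 := congrArg (fun t => (-1 : ℝ) ^ n * t) h2
  simp only [Pi.zero_apply, mul_zero, Finset.mul_sum] at h3
  rw [← h3]
  apply Finset.sum_congr rfl
  intro k hk
  have hk' : k ≤ n := Nat.lt_succ_iff.mp (Finset.mem_range.mp hk)
  obtain ⟨d, rfl⟩ := Nat.exists_eq_add_of_le hk'
  rw [zsmul_eq_mul]
  push_cast
  rw [Nat.add_sub_cancel_left, pow_add, nsmul_eq_mul, mul_one]
  have : (-1 : ℝ) ^ d * (-1) ^ d = 1 := by rw [← mul_pow]; simp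
  linear_combination (-(-1 : ℝ) ^ k * ((k + d).choose k) * (ascPochhammer ℝ m).eval (c + k)) * this

lemma jacobi_orth_pow {a b : ℝ} (ha : -1 < a) (hb : -1 < b) {m n : ℕ} (h : m < n) :
    jacL a b (jacobiP a b n * (X - C 1) ^ m) = 0 := by
  unfold jacobiP
  rw [Finset.sum_mul, jacL_sum ha hb]
  have key : ∀ k ∈ Finset.range (n + 1), jacL a b
      (C (Real.Gamma (n + a + 1) / (Real.Gamma ((n : ℝ) - k + 1) * Real.Gamma (a + k + 1)) *
        (Real.Gamma (n + b + 1) / (Real.Gamma ((k : ℝ) + 1) * Real.Gamma ((n : ℝ) - k + b + 1)))) *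
      (C (2⁻¹ : ℝ) * (X - 1)) ^ k * (C (2⁻¹ : ℝ) * (X + 1)) ^ (n - k) * (X - C 1) ^ m) =
      (Real.Gamma (n + a + 1) * Real.Gamma (n + b + 1) * (2 ^ a * 2 ^ b * (-2) ^ m * 2) /
          Real.Gamma (a + b + n + m + 2) / n.factorial) *
        ((-1 : ℝ) ^ k * n.choose k * (ascPochhammer ℝ m).eval (a + 1 + k)) := by
    intro k hk
    have hk' : k ≤ n := Nat.lt_succ_iff.mp (Finset.mem_range.mp hk)
    obtain ⟨d, rfl⟩ := Nat.exists_eq_add_of_le hk'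
    have hk0 : (0 : ℝ) ≤ k := k.cast_nonneg
    have hd0 : (0 : ℝ) ≤ d := d.cast_nonneg
    rw [mul_assoc (C _ * _), mul_assoc (C _), ← mul_assoc (_ ^ k), jacL_smul,
      jacL_moment ha hb, Nat.add_sub_cancel_left]
    have e1 : (((k + d : ℕ) : ℝ) - k + 1) = d + 1 := by push_cast; ring
    have e2 : (((k + d : ℕ) : ℝ) - k + b + 1) = b + d + 1 := by push_cast; ring
    have e3 : a + k + m + 1 = (a + 1 + k) + m := by ring
    have e4 : a + k + 1 = a + 1 + k := by ring
    rw [e1, e2, e3, e4, Gamma_asc (a + 1 + k) (by linarith) m, Real.Gamma_nat_eq_factorial,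
      Real.Gamma_nat_eq_factorial, Nat.cast_add_choose]
    have g1 : Real.Gamma (a + 1 + k) ≠ 0 := (Real.Gamma_pos_of_pos (by linarith)).ne'
    have g2 : Real.Gamma (b + d + 1) ≠ 0 := (Real.Gamma_pos_of_pos (by linarith)).ne'
    have f1 : (k.factorial : ℝ) ≠ 0 := by positivity
    have f2 : (d.factorial : ℝ) ≠ 0 := by positivity
    have f3 : ((k + d).factorial : ℝ) ≠ 0 := by positivity
    generalize Real.Gamma (a + b + (k + d : ℕ) + m + 2) = G
    field_simp
  rw [Finset.sum_congr rfl key, ← Finset.mul_sum, alt_sum _ h, mul_zero]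

lemma jacobi_natDegree (a b : ℝ) (n : ℕ) : (jacobiP a b n).natDegree ≤ n := by
  unfold jacobiP
  apply natDegree_sum_le_of_forall_le
  intro k hk
  have hk' : k ≤ n := Nat.lt_succ_iff.mp (Finset.mem_range.mp hk)
  have h1 : ((C (2⁻¹ : ℝ) * (X - 1)) ^ k).natDegree ≤ k * 1 :=
    natDegree_pow_le_of_le k (by compute_degree)
  have h2 : ((C (2⁻¹ : ℝ) * (X + 1)) ^ (n - k)).natDegree ≤ (n - k) * 1 :=
    natDegree_pow_le_of_le (n - k) (by compute_degree)
  have h3 := natDegree_mul_le_of_le ((natDegree_C_mul_le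
    (Real.Gamma (n + a + 1) / (Real.Gamma ((n : ℝ) - k + 1) * Real.Gamma (a + k + 1)) *
        (Real.Gamma (n + b + 1) / (Real.Gamma ((k : ℝ) + 1) * Real.Gamma ((n : ℝ) - k + b + 1))))
    _).trans h1) h2
  exact h3.trans (by omega)

lemma jacobi_orth_lt {a b : ℝ} (ha : -1 < a) (hb : -1 < b) {m n : ℕ} (h : m < n) :
    jacL a b (jacobiP a b n * jacobiP a b m) = 0 := by
  rw [← sum_taylor_eq (jacobiP a b m) 1, Polynomial.sum, Finset.mul_sum, jacL_sum ha hb]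
  apply Finset.sum_eq_zero
  intro i hi
  have := le_natDegree_of_mem_supp i hi
  rw [natDegree_taylor] at this
  rw [mul_left_comm, jacL_smul, jacobi_orth_pow ha hb
    (this.trans_lt ((jacobi_natDegree a b m).trans_lt h)), mul_zero]

lemma jacobi_orth {a b : ℝ} (ha : -1 < a) (hb : -1 < b) {m n : ℕ} (h : m ≠ n) :
    jacL a b (jacobiP a b n * jacobiP a b m) = 0 := by
  rcases lt_or_gt_of_ne h with h | h
  · exact jacobi_orth_lt ha hb h
  · rw [mul_comm]; exact jacobi_orth_lt ha hb h

lemma jacL_self (a b : ℝ) (n : ℕ) :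
    jacL a b (jacobiP a b n * jacobiP a b n) = jacobiNormSq a b n := by
  unfold jacL jacobiNormSq
  congr 1; ext x; rw [eval_mul]; ring

lemma jacobiNormSq_nonneg (a b : ℝ) (n : ℕ) : 0 ≤ jacobiNormSq a b n := by
  unfold jacobiNormSq
  apply intervalIntegral.integral_nonneg (by norm_num)
  intro x hx
  have h1 := Real.rpow_nonneg (show 0 ≤ 1 - x by linarith [hx.2]) a
  have h2 := Real.rpow_nonneg (show 0 ≤ 1 + x by linarith [hx.1]) b
  positivity

lemma kernK_nonneg (a b : ℝ) (j n : ℕ) : 0 ≤ kernK a b j j n 1 1 := by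
  unfold kernK
  exact Finset.sum_nonneg fun i _ => div_nonneg (mul_self_nonneg _) (jacobiNormSq_nonneg a b i)

lemma kern_deriv (a b : ℝ) (j n : ℕ) :
    (derivative^[j] (kernKPoly a b j n)).eval 1 = kernK a b j j n 1 1 := by
  unfold kernKPoly kernK
  rw [iterate_derivative_sum, eval_finsetSum]
  apply Finset.sum_congr rfl
  intro i _
  rw [iterate_derivative_C_mul, eval_mul, eval_C]
  ring

lemma jacL_kern_jacobi {a b : ℝ} (ha : -1 < a) (hb : -1 < b) (j n i : ℕ) :
    jacL a b (kernKPoly a b j n * jacobiP a b i) =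
      if i ≤ n then (derivative^[j] (jacobiP a b i)).eval 1 / jacobiNormSq a b i *
        jacobiNormSq a b i else 0 := by
  unfold kernKPoly
  rw [Finset.sum_mul, jacL_sum ha hb]
  split_ifs with h
  · rw [Finset.sum_eq_single i]
    · rw [mul_assoc, jacL_smul, jacL_self]
    · intro l _ hl
      rw [mul_assoc, jacL_smul, jacobi_orth ha hb hl.symm, mul_zero]
    · intro h2; exact absurd (Finset.mem_range.mpr (Nat.lt_succ_of_le h)) h2
  · apply Finset.sum_eq_zero
    intro l hl
    have := Finset.mem_range.mp hl
    rw [mul_assoc, jacL_smul, jacobi_orth ha hb (by omega), mul_zero]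

lemma jacL_kern_kern {a b : ℝ} (ha : -1 < a) (hb : -1 < b) (j n : ℕ) :
    jacL a b (kernKPoly a b j n * kernKPoly a b j n) = kernK a b j j n 1 1 := by
  conv_lhs => arg 3; arg 2; unfold kernKPoly
  unfold kernK
  rw [Finset.mul_sum, jacL_sum ha hb]
  apply Finset.sum_congr rfl
  intro i hi
  have := Finset.mem_range.mp hi
  rw [mul_left_comm, jacL_smul, jacL_kern_jacobi ha hb, if_pos (by omega)]
  by_cases h : jacobiNormSq a b i = 0
  · simp [h]
  · field_simp

/-- exact formula for the Sobolev norm of `Q_n`. -/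
theorem sobQ_normSq (α β : ℝ) (hα : -1 < α) (hβ : -1 < β) (j : ℕ) (Ms : ℕ → ℝ)
    (hMs : ∀ n, 0 ≤ Ms n) (n : ℕ) (hn : 1 ≤ n) :
    sobInner α β j (Ms n) (sobQ α β j Ms n) (sobQ α β j Ms n) =
      jacobiNormSq α β n +
        Ms n * ((Polynomial.derivative^[j] (jacobiP α β n)).eval 1) ^ 2 /
          (1 + Ms n * kernK α β j j (n - 1) 1 1) := by
  have hD : 0 < 1 + Ms n * kernK α β j j (n - 1) 1 1 := by
    have := mul_nonneg (hMs n) (kernK_nonneg α β j (n - 1))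
    linarith
  have hS : ∀ f : Polynomial ℝ, sobInner α β j (Ms n) f f =
      jacL α β (f * f) + Ms n * ((derivative^[j] f).eval 1) ^ 2 := by
    intro f
    unfold sobInner jacL
    simp only [eval_mul, mul_assoc, pow_two]
  have hPK : jacL α β (kernKPoly α β j (n - 1) * jacobiP α β n) = 0 := by
    rw [jacL_kern_jacobi hα hβ, if_neg (by omega)]
  rw [hS]
  unfold sobQ
  rw [iterate_derivative_sub, iterate_derivative_C_mul, eval_sub, eval_mul, eval_C, kern_deriv]
  generalize (derivative^[j] (jacobiP α β n)).eval 1 = d at *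
  have hKK := jacL_kern_kern hα hβ j (n - 1)
  generalize kernK α β j j (n - 1) 1 1 = κ at *
  generalize hc : Ms n * d / (1 + Ms n * κ) = c
  have hexp : (jacobiP α β n - C c * kernKPoly α β j (n - 1)) *
      (jacobiP α β n - C c * kernKPoly α β j (n - 1)) =
      jacobiP α β n * jacobiP α β n - C (2 * c) * (kernKPoly α β j (n - 1) * jacobiP α β n) +
        C (c ^ 2) * (kernKPoly α β j (n - 1) * kernKPoly α β j (n - 1)) := by
    rw [C_mul, C_pow, show (C (2 : ℝ)) = (2 : Polynomial ℝ) from rfl]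
    ring
  rw [hexp, jacL_add hα hβ, jacL_sub hα hβ, jacL_smul, jacL_smul, hPK, hKK, jacL_self, ← hc]
  field_simp
  ring
end

section
/- Fix real α, β > −1, j ∈ ℕ, γ ∈ ℝ, M > 0, and a sequence M_n ≥ 0 with lim_{n→∞} M_n n^γ = M. Then lim_{n→∞} (Q_n, Q_n)_{S,n} / ‖P_n^{(α,β)}‖² = 1. -/
open Polynomial Filter

/-- coefficients -/
noncomputable def jcoef (α β : ℝ) (n k : ℕ) : ℝ :=
  Real.Gamma (n + α + 1) / (Real.Gamma ((n : ℝ) - k + 1) * Real.Gamma (α + k + 1)) *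
        (Real.Gamma (n + β + 1) / (Real.Gamma ((k : ℝ) + 1) * Real.Gamma ((n : ℝ) - k + β + 1)))

noncomputable def uu : Polynomial ℝ := Polynomial.C (2⁻¹ : ℝ) * (Polynomial.X - 1)
noncomputable def vv : Polynomial ℝ := Polynomial.C (2⁻¹ : ℝ) * (Polynomial.X + 1)

lemma jacobiP_eq (α β : ℝ) (n : ℕ) : jacobiP α β n =
    ∑ k ∈ Finset.range (n + 1), C (jcoef α β n k) * uu ^ k * vv ^ (n - k) := rfl

lemma jcoef_a (a b : ℝ) (ha : -1 < a) (n k : ℕ) (hk : k ≤ n) :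
    jcoef (a+1) (b+1) n k * (k + a + 1) = (n + 1 - k) * jcoef a b (n+1) k := by
  have hk' : (k:ℝ) ≤ n := by exact_mod_cast hk
  have hk0 : (0:ℝ) ≤ k := by positivity
  unfold jcoef
  push_cast
  have e1 : Real.Gamma ((n:ℝ) + 1 - k + 1) = (n - k + 1) * Real.Gamma ((n:ℝ) - k + 1) := by
    rw [← Real.Gamma_add_one (by linarith)]; ring_nf
  have e2 : Real.Gamma (a + 1 + k + 1) = (a + k + 1) * Real.Gamma (a + k + 1) := by
    rw [← Real.Gamma_add_one (by linarith)]; ring_nf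
  rw [e1, e2, show (n:ℝ) + (a + 1) + 1 = n + 1 + a + 1 by ring,
    show (n:ℝ) + (b + 1) + 1 = n + 1 + b + 1 by ring,
    show (n:ℝ) - k + (b + 1) + 1 = n + 1 - k + b + 1 by ring]
  have h1 : (n:ℝ) - k + 1 ≠ 0 := by linarith
  have h2 : a + k + 1 ≠ 0 := by linarith
  simp only [div_eq_mul_inv, mul_inv]
  linear_combination (Real.Gamma (n + 1 + a + 1) * (Real.Gamma ((n:ℝ) - k + 1))⁻¹ * (Real.Gamma (a + k + 1))⁻¹ * Real.Gamma (n + 1 + b + 1) * (Real.Gamma ((k:ℝ)+1))⁻¹ * (Real.Gamma ((n:ℝ) + 1 - k + b + 1))⁻¹) * (mul_inv_cancel₀ h2 - mul_inv_cancel₀ h1)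

lemma jcoef_b (a b : ℝ) (hb : -1 < b) (n k : ℕ) (hk : k ≤ n) :
    jcoef (a+1) (b+1) n k * (n - k + b + 1) = (k + 1) * jcoef a b (n+1) (k+1) := by
  have hk' : (k:ℝ) ≤ n := by exact_mod_cast hk
  have hk0 : (0:ℝ) ≤ k := by positivity
  unfold jcoef
  push_cast
  have e1 : Real.Gamma ((k:ℝ) + 1 + 1) = (k + 1) * Real.Gamma ((k:ℝ) + 1) := by
    rw [← Real.Gamma_add_one (by linarith)]
  have e2 : Real.Gamma ((n:ℝ) - k + (b + 1) + 1) = (n - k + b + 1) * Real.Gamma ((n:ℝ) - k + b + 1) := by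
    rw [← Real.Gamma_add_one (by linarith)]; ring_nf
  rw [e1, e2, show (n:ℝ) + (a + 1) + 1 = n + 1 + a + 1 by ring,
    show (n:ℝ) + (b + 1) + 1 = n + 1 + b + 1 by ring,
    show (n:ℝ) + 1 - (k + 1) + b + 1 = n - k + b + 1 by ring,
    show (n:ℝ) + 1 - (k + 1) + 1 = n - k + 1 by ring,
    show a + 1 + (k:ℝ) + 1 = a + (k + 1) + 1 by ring]
  have h1 : (k:ℝ) + 1 ≠ 0 := by linarith
  have h2 : (n:ℝ) - k + b + 1 ≠ 0 := by linarith
  simp only [div_eq_mul_inv, mul_inv]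
  linear_combination (Real.Gamma (n + 1 + a + 1) * (Real.Gamma ((n:ℝ) - k + 1))⁻¹ * (Real.Gamma (a + (k + 1) + 1))⁻¹ * Real.Gamma (n + 1 + b + 1) * (Real.Gamma ((k:ℝ)+1))⁻¹ * (Real.Gamma ((n:ℝ) - k + b + 1))⁻¹) * (mul_inv_cancel₀ h2 - mul_inv_cancel₀ h1)

lemma der_uu : derivative uu = C 2⁻¹ := by simp [uu]
lemma der_vv : derivative vv = C 2⁻¹ := by simp [vv]

lemma CC2 : (C (2⁻¹:ℝ) : ℝ[X]) * 2 = 1 := by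
  rw [show (2:ℝ[X]) = C 2 from (map_ofNat C 2).symm, ← C_mul]; norm_num

lemma uu_two : 2 * uu = X - 1 := by
  unfold uu; linear_combination (X - 1) * CC2
lemma vv_two : 2 * vv = X + 1 := by
  unfold vv; linear_combination (X + 1) * CC2

lemma uu_der_pow (k : ℕ) : 2 * (uu * derivative (uu ^ k)) = (k : ℝ[X]) * uu ^ k := by
  cases k with
  | zero => simp
  | succ k =>
    rw [derivative_pow_succ, der_uu]
    simp only [map_add, map_natCast, C_1]
    push_cast
    linear_combination (uu * (k+1) * uu ^ k) * CC2
lemma vv_der_pow (k : ℕ) : 2 * (vv * derivative (vv ^ k)) = (k : ℝ[X]) * vv ^ k := by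
  cases k with
  | zero => simp
  | succ k =>
    rw [derivative_pow_succ, der_vv]
    simp only [map_add, map_natCast, C_1]
    push_cast
    linear_combination (vv * (k+1) * vv ^ k) * CC2

/-- `T f = ((1-x)^(a+1) (1+x)^(b+1) f)' / ((1-x)^a (1+x)^b)`. -/
noncomputable def TT (a b : ℝ) (f : ℝ[X]) : ℝ[X] :=
  (1 - X) * (1 + X) * derivative f + (C (b+1) * (1 - X) - C (a+1) * (1 + X)) * f

lemma TT_term (a b c : ℝ) (k m : ℕ) : TT a b (C c * uu ^ k * vv ^ m) =
    -2 * (C (c * (k + a + 1)) * uu ^ k * vv ^ (m+1) + C (c * (m + b + 1)) * uu ^ (k+1) * vv ^ m) := by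
  unfold TT
  rw [show (1 - X : ℝ[X]) = -2 * uu by linear_combination uu_two,
    show (1 + X : ℝ[X]) = 2 * vv by linear_combination -vv_two]
  rw [derivative_mul, derivative_C_mul]
  simp only [map_add, map_mul, C_1, map_natCast]
  linear_combination (-2) * C c * (vv * vv ^ m) * uu_der_pow k + (-2) * C c * uu * uu ^ k * vv_der_pow m

lemma TT_sum (a b : ℝ) (s : Finset ℕ) (f : ℕ → ℝ[X]) : TT a b (∑ i ∈ s, f i) = ∑ i ∈ s, TT a b (f i) := by
  simp only [TT, derivative_sum, Finset.mul_sum, Finset.sum_add_distrib]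

lemma raising (a b : ℝ) (ha : -1 < a) (hb : -1 < b) (n : ℕ) :
    TT a b (jacobiP (a+1) (b+1) n) = C (-2 * (n+1) : ℝ) * jacobiP a b (n+1) := by
  rw [jacobiP_eq, TT_sum, jacobiP_eq]
  have h1 : ∀ k ∈ Finset.range (n+1), TT a b (C (jcoef (a+1) (b+1) n k) * uu ^ k * vv ^ (n - k)) =
      -2 * (C ((n + 1 - k) * jcoef a b (n+1) k) * uu ^ k * vv ^ (n + 1 - k)) +
      -2 * (C (((k+1:ℕ):ℝ) * jcoef a b (n+1) (k+1)) * uu ^ (k+1) * vv ^ (n + 1 - (k+1))) := by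
    intro k hk
    have hk' : k ≤ n := by simpa [Nat.lt_succ_iff] using hk
    rw [TT_term, Nat.cast_sub hk', jcoef_a a b ha n k hk', jcoef_b a b hb n k hk',
      show n + 1 - k = n - k + 1 by omega, show n + 1 - (k+1) = n - k by omega]
    push_cast
    ring
  rw [Finset.sum_congr rfl h1, Finset.sum_add_distrib]
  have h2 := Finset.sum_range_succ (fun k : ℕ => -2 * (C (((n:ℝ) + 1 - k) * jcoef a b (n+1) k) * uu ^ k * vv ^ (n + 1 - k))) (n+1)
  have h3 := Finset.sum_range_succ' (fun k : ℕ => -2 * (C ((k:ℝ) * jcoef a b (n+1) k) * uu ^ k * vv ^ (n + 1 - k))) (n+1)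
  have h4 : C (-2 * (n+1) : ℝ) * ∑ k ∈ Finset.range (n + 1 + 1), C (jcoef a b (n+1) k) * uu ^ k * vv ^ (n + 1 - k)
    = ∑ k ∈ Finset.range (n + 1 + 1), -2 * (C (((n:ℝ) + 1 - k) * jcoef a b (n+1) k) * uu ^ k * vv ^ (n + 1 - k)) +
      ∑ k ∈ Finset.range (n + 1 + 1), -2 * (C ((k:ℝ) * jcoef a b (n+1) k) * uu ^ k * vv ^ (n + 1 - k)) := by
    rw [Finset.mul_sum, ← Finset.sum_add_distrib]
    refine Finset.sum_congr rfl fun k _ => ?_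
    simp only [map_mul, map_add, map_sub, map_neg, map_ofNat, map_natCast, C_1]
    ring
  rw [h4, h2, h3]
  simp

lemma lowering (a b : ℝ) (ha : -1 < a) (hb : -1 < b) (n : ℕ) :
    derivative (jacobiP a b (n+1)) = C ((n + a + b + 2) / 2) * jacobiP (a+1) (b+1) n := by
  rw [jacobiP_eq, jacobiP_eq, derivative_sum]
  have h1 : ∀ k ∈ Finset.range (n+1+1), derivative (C (jcoef a b (n+1) k) * uu ^ k * vv ^ (n + 1 - k)) =
      C (jcoef a b (n+1) k) * (C (k:ℝ) * C 2⁻¹ * uu ^ (k-1) * vv ^ (n + 1 - k)) +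
      C (jcoef a b (n+1) k) * (C ((n:ℝ) + 1 - k) * C 2⁻¹ * uu ^ k * vv ^ (n + 1 - k - 1)) := by
    intro k hk
    have hk' : k ≤ n + 1 := by simpa [Nat.lt_succ_iff] using hk
    rw [derivative_mul, derivative_C_mul, derivative_pow, derivative_pow, der_uu, der_vv,
      Nat.cast_sub hk']
    push_cast
    ring
  rw [Finset.sum_congr rfl h1, Finset.sum_add_distrib]
  rw [Finset.sum_range_succ', Finset.sum_range_succ _ (n+1), Finset.mul_sum]
  have h0 : C (jcoef a b (n+1) 0) * (C ((0:ℕ):ℝ) * C (2⁻¹:ℝ) * uu ^ (0-1) * vv ^ (n + 1 - 0)) = 0 := by simp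
  have h0' : C (jcoef a b (n+1) (n+1)) * (C ((n:ℝ) + 1 - ((n+1:ℕ):ℝ)) * C (2⁻¹:ℝ) * uu ^ (n+1) * vv ^ (n + 1 - (n+1) - 1)) = 0 := by simp
  rw [h0, h0', add_zero, add_zero, ← Finset.sum_add_distrib]
  refine Finset.sum_congr rfl fun k hk => ?_
  have hk' : k ≤ n := by simpa [Nat.lt_succ_iff] using hk
  have e1 := jcoef_a a b ha n k hk'
  have e2 := jcoef_b a b hb n k hk'
  have e : C ((((k+1:ℕ):ℝ) * jcoef a b (n+1) (k+1) + (n+1-k) * jcoef a b (n+1) k) * 2⁻¹) =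
    C ((n + a + b + 2) / 2 * jcoef (a+1) (b+1) n k) := by
    congr 1
    push_cast
    rw [← e1, ← e2]; ring
  rw [show k + 1 - 1 = k by omega, show n + 1 - (k+1) = n - k by omega, show n + 1 - k - 1 = n - k by omega]
  simp only [map_mul, map_add] at e ⊢
  linear_combination (uu ^ k * vv ^ (n-k)) * e

lemma W_int (a b : ℝ) (ha : -1 < a) (hb : -1 < b) :
    IntervalIntegrable (fun x : ℝ => (1 - x) ^ a * (1 + x) ^ b) MeasureTheory.volume (-1) 1 := by
  have h1 : IntervalIntegrable (fun x : ℝ => (1 - x) ^ a) MeasureTheory.volume 0 1 := by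
    have := (intervalIntegral.intervalIntegrable_rpow' (a := 1) (b := 0) ha).comp_sub_left 1
    simpa using this
  have h2 : IntervalIntegrable (fun x : ℝ => (1 + x) ^ b) MeasureTheory.volume (-1) 0 := by
    have := (intervalIntegral.intervalIntegrable_rpow' (a := 0) (b := 1) hb).comp_add_left 1
    simpa using this
  refine IntervalIntegrable.trans (b := 0) ?_ ?_
  · refine h2.continuousOn_mul ?_
    intro x hx
    rw [Set.uIcc_of_le (by norm_num)] at hx
    refine ContinuousAt.continuousWithinAt ?_
    refine ContinuousAt.rpow_const (by fun_prop) (Or.inl ?_)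
    have := hx.2; linarith
  · refine h1.mul_continuousOn ?_
    intro x hx
    rw [Set.uIcc_of_le (by norm_num)] at hx
    refine ContinuousAt.continuousWithinAt ?_
    refine ContinuousAt.rpow_const (by fun_prop) (Or.inl ?_)
    have := hx.1; linarith

lemma pW_int (a b : ℝ) (ha : -1 < a) (hb : -1 < b) (p : ℝ[X]) :
    IntervalIntegrable (fun x : ℝ => p.eval x * ((1 - x) ^ a * (1 + x) ^ b)) MeasureTheory.volume (-1) 1 :=
  (W_int a b ha hb).continuousOn_mul (by fun_prop)

/-- The Jacobi moment functional. -/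
noncomputable def LL (a b : ℝ) (ha : -1 < a) (hb : -1 < b) : ℝ[X] →ₗ[ℝ] ℝ where
  toFun p := ∫ x in (-1 : ℝ)..1, p.eval x * ((1 - x) ^ a * (1 + x) ^ b)
  map_add' p q := by
    rw [← intervalIntegral.integral_add (pW_int a b ha hb p) (pW_int a b ha hb q)]
    simp only [eval_add, add_mul]
  map_smul' c p := by
    rw [RingHom.id_apply, smul_eq_mul, ← intervalIntegral.integral_const_mul]
    simp only [eval_smul, smul_eq_mul, mul_assoc]

lemma LL_apply (a b : ℝ) (ha : -1 < a) (hb : -1 < b) (p : ℝ[X]) :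
    LL a b ha hb p = ∫ x in (-1 : ℝ)..1, p.eval x * ((1 - x) ^ a * (1 + x) ^ b) := rfl

lemma LL_C_mul (a b : ℝ) (ha : -1 < a) (hb : -1 < b) (c : ℝ) (p : ℝ[X]) :
    LL a b ha hb (C c * p) = c * LL a b ha hb p := by
  rw [← smul_eq_C_mul, map_smul, smul_eq_mul]

lemma LL_pos (a b : ℝ) (ha : -1 < a) (hb : -1 < b) : 0 < LL a b ha hb 1 := by
  rw [LL_apply]
  refine intervalIntegral.intervalIntegral_pos_of_pos_on (pW_int a b ha hb 1) ?_ (by norm_num)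
  intro x hx
  have h1 : 0 < 1 - x := by linarith [hx.2]
  have h2 : 0 < 1 + x := by linarith [hx.1]
  simp only [eval_one]
  positivity

lemma LL_shift (a b : ℝ) (ha : -1 < a) (hb : -1 < b) (ha' : -1 < a + 1) (hb' : -1 < b + 1) (p : ℝ[X]) :
    LL (a+1) (b+1) ha' hb' p = LL a b ha hb ((1 - X) * (1 + X) * p) := by
  rw [LL_apply, LL_apply]
  refine intervalIntegral.integral_congr ?_
  intro x hx
  rw [Set.uIcc_of_le (by norm_num)] at hx
  have e1 : (1 - x) ^ (a + 1) = (1 - x) ^ a * (1 - x) :=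
    Real.rpow_add_one' (by linarith [hx.2]) (by linarith)
  have e2 : (1 + x) ^ (b + 1) = (1 + x) ^ b * (1 + x) :=
    Real.rpow_add_one' (by linarith [hx.1]) (by linarith)
  simp only [e1, e2, eval_mul, eval_sub, eval_add, eval_one, eval_X]
  ring

lemma LL_TT (a b : ℝ) (ha : -1 < a) (hb : -1 < b) (f : ℝ[X]) : LL a b ha hb (TT a b f) = 0 := by
  rw [LL_apply]
  have key := intervalIntegral.integral_eq_sub_of_hasDerivAt_of_le (a := -1) (b := 1)
    (f := fun x : ℝ => (1 - x) ^ (a+1) * (1 + x) ^ (b+1) * f.eval x)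
    (f' := fun x : ℝ => (TT a b f).eval x * ((1 - x) ^ a * (1 + x) ^ b)) (by norm_num) ?_ ?_
    (pW_int a b ha hb _)
  · rw [key]
    have h1 : a + 1 ≠ 0 := by linarith
    have h2 : b + 1 ≠ 0 := by linarith
    simp [Real.zero_rpow h1, Real.zero_rpow h2]
  · refine ContinuousOn.mul (ContinuousOn.mul ?_ ?_) (by fun_prop)
    · exact ContinuousOn.rpow_const (by fun_prop) (fun x _ => Or.inr (by linarith))
    · exact ContinuousOn.rpow_const (by fun_prop) (fun x _ => Or.inr (by linarith))
  · intro x hx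
    have p1 : 0 < 1 - x := by linarith [hx.2]
    have p2 : 0 < 1 + x := by linarith [hx.1]
    have d1 : HasDerivAt (fun x : ℝ => (1 - x) ^ (a+1)) _ x :=
      ((hasDerivAt_id x).const_sub 1).rpow_const (p := a+1) (Or.inl p1.ne')
    have d2 : HasDerivAt (fun x : ℝ => (1 + x) ^ (b+1)) _ x :=
      ((hasDerivAt_id x).const_add 1).rpow_const (p := b+1) (Or.inl p2.ne')
    have d3 := f.hasDerivAt x
    refine ((d1.mul d2).mul d3).congr_deriv ?_
    simp only [id, Pi.mul_apply, add_sub_cancel_right, Real.rpow_add_one p1.ne', Real.rpow_add_one p2.ne', TT,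
      eval_mul, eval_sub, eval_add, eval_one, eval_X, eval_C]
    ring

lemma LL_rec (a b : ℝ) (ha : -1 < a) (hb : -1 < b) (ha' : -1 < a + 1) (hb' : -1 < b + 1)
    (n : ℕ) (q : ℝ[X]) :
    LL a b ha hb (jacobiP a b (n+1) * q) =
      (1 / (2 * (n + 1))) * LL (a+1) (b+1) ha' hb' (jacobiP (a+1) (b+1) n * derivative q) := by
  have h := LL_TT a b ha hb (jacobiP (a+1) (b+1) n * q)
  have e : TT a b (jacobiP (a+1) (b+1) n * q) = C (-2 * (n+1) : ℝ) * (jacobiP a b (n+1) * q) +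
      (1 - X) * (1 + X) * (jacobiP (a+1) (b+1) n * derivative q) := by
    rw [← mul_assoc, ← raising a b ha hb]
    unfold TT
    rw [derivative_mul]
    ring
  rw [e, map_add, LL_C_mul, ← LL_shift a b ha hb ha' hb'] at h
  have : (n:ℝ) + 1 ≠ 0 := by positivity
  field_simp
  linear_combination -h

lemma jacobiP_zero (a b : ℝ) (ha : -1 < a) (hb : -1 < b) : jacobiP a b 0 = 1 := by
  rw [jacobiP_eq]
  have h1 : Real.Gamma (a+1) ≠ 0 := (Real.Gamma_pos_of_pos (by linarith)).ne'
  have h2 : Real.Gamma (b+1) ≠ 0 := (Real.Gamma_pos_of_pos (by linarith)).ne'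
  simp [jcoef, h1, h2]

lemma LL_one_rec (a b : ℝ) (ha : -1 < a) (hb : -1 < b) (ha' : -1 < a + 1) (hb' : -1 < b + 1) :
    LL (a+1) (b+1) ha' hb' 1 = 4 * (a+1) * (b+1) / ((a+b+2) * (a+b+3)) * LL a b ha hb 1 := by
  rw [LL_shift a b ha hb]
  have h1 := LL_TT a b ha hb 1
  have h2 := LL_TT a b ha hb X
  have e1 : TT a b 1 = C (b - a) * 1 + C (-(a+b+2)) * X := by
    have h2 : (C (2:ℝ) : ℝ[X]) = 2 := map_ofNat C 2
    simp [TT, h2]; ring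
  have e2 : TT a b X = C 1 * 1 + C (b - a) * X + C (-(a+b+3)) * X^2 := by
    have h3 : (C (3:ℝ) : ℝ[X]) = 3 := map_ofNat C 3
    simp [TT, h3]; ring
  have e3 : (1 - X) * (1 + X) * 1 = C 1 * 1 + C (-1) * (X:ℝ[X])^2 := by
    simp; ring
  rw [e1, map_add, LL_C_mul, LL_C_mul] at h1
  rw [e2, map_add, map_add, LL_C_mul, LL_C_mul, LL_C_mul] at h2
  rw [e3, map_add, LL_C_mul, LL_C_mul]
  have p1 : a+b+2 ≠ 0 := by linarith
  have p2 : a+b+3 ≠ 0 := by linarith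
  field_simp
  linear_combination (a+b+2) * h2 + (b-a) * h1

lemma LL_congr {a b a' b' : ℝ} (ha : -1 < a) (hb : -1 < b) (ha' : -1 < a') (hb' : -1 < b')
    (h1 : a = a') (h2 : b = b') (p : ℝ[X]) : LL a b ha hb p = LL a' b' ha' hb' p := by
  subst h1; subst h2; rfl

lemma gt_add {a : ℝ} (ha : -1 < a) (n : ℕ) : -1 < a + n := by
  have : (0:ℝ) ≤ n := by positivity
  linarith

lemma LL_iter (n : ℕ) : ∀ (a b : ℝ) (ha : -1 < a) (hb : -1 < b) (q : ℝ[X]),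
    LL a b ha hb (jacobiP a b n * q) =
      (1 / (2 ^ n * n.factorial)) * LL (a+n) (b+n) (gt_add ha n) (gt_add hb n) (derivative^[n] q) := by
  induction n with
  | zero =>
    intro a b ha hb q
    rw [jacobiP_zero a b ha hb, one_mul]
    simp only [pow_zero, Nat.factorial_zero, Nat.cast_one, mul_one, div_one, one_mul,
      Function.iterate_zero, id]
    exact LL_congr _ _ _ _ (by simp) (by simp) _
  | succ n ih =>
    intro a b ha hb q
    have ha' : -1 < a + 1 := by linarith
    have hb' : -1 < b + 1 := by linarith
    rw [LL_rec a b ha hb ha' hb', ih (a+1) (b+1) ha' hb', Function.iterate_succ_apply,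
      LL_congr _ _ (gt_add ha (n+1)) (gt_add hb (n+1)) (by push_cast; ring) (by push_cast; ring)
        (derivative^[n] (derivative q)), ← mul_assoc]
    congr 1
    rw [Nat.factorial_succ]
    push_cast
    field_simp
    ring

/-- product -/
noncomputable def ddf (s : ℝ) (n j : ℕ) : ℝ := ∏ i ∈ Finset.range j, ((n + s + 1 + i) / 2)

lemma jacobiP_congr {a b a' b' : ℝ} (h1 : a = a') (h2 : b = b') (n : ℕ) :
    jacobiP a b n = jacobiP a' b' n := by subst h1; subst h2; rfl

lemma der_iter (j m : ℕ) : ∀ (a b : ℝ) (_ : -1 < a) (_ : -1 < b),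
    derivative^[j] (jacobiP a b (m+j)) = C (ddf (a+b) (m+j) j) * jacobiP (a+j) (b+j) m := by
  induction j with
  | zero =>
    intro a b ha hb
    simp [ddf]
  | succ j ih =>
    intro a b ha hb
    rw [Function.iterate_succ_apply, ← add_assoc, lowering a b ha hb, iterate_derivative_C_mul,
      ih (a+1) (b+1) (by linarith) (by linarith), ← mul_assoc, ← C_mul]
    rw [jacobiP_congr (a := a+1+j) (a' := a + ((j+1:ℕ):ℝ)) (b := b+1+j) (b' := b+((j+1:ℕ):ℝ)) (by push_cast; ring) (by push_cast; ring)]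
    congr 2
    unfold ddf
    rw [Finset.prod_range_succ', mul_comm]
    congr 1
    · refine Finset.prod_congr rfl fun i _ => ?_
      push_cast; ring
    · push_cast; ring

lemma ddf_pos (s : ℝ) (hs : -2 < s) (n j : ℕ) (hn : 1 ≤ n) : 0 < ddf s n j := by
  refine Finset.prod_pos fun i _ => ?_
  have : (1:ℝ) ≤ n := by exact_mod_cast hn
  have : (0:ℝ) ≤ i := by positivity
  linarith

lemma ddf_succ (s : ℝ) (n j : ℕ) : ddf s (n+1) j * ((n + s + 1) / 2) = ddf s n (j+1) := by
  unfold ddf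
  rw [Finset.prod_range_succ']
  push_cast
  congr 1
  · refine Finset.prod_congr rfl fun i _ => ?_
    ring
  · ring

lemma ddf_succ' (s : ℝ) (n j : ℕ) : ddf s n (j+1) = ddf s n j * ((n + s + 1 + j) / 2) := by
  unfold ddf
  rw [Finset.prod_range_succ]

lemma der_full (a b : ℝ) (ha : -1 < a) (hb : -1 < b) (n : ℕ) :
    derivative^[n] (jacobiP a b n) = C (ddf (a+b) n n) := by
  have := der_iter n 0 a b ha hb
  rw [jacobiP_zero _ _ (gt_add ha n) (gt_add hb n)] at this
  simpa using this

lemma der_over (a b : ℝ) (ha : -1 < a) (hb : -1 < b) (n i : ℕ) (h : i < n) :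
    derivative^[n] (jacobiP a b i) = 0 := by
  obtain ⟨k, rfl⟩ : ∃ k, n = k + 1 + i := ⟨n - i - 1, by omega⟩
  rw [Function.iterate_add_apply, der_full a b ha hb, Function.iterate_succ_apply, derivative_C]
  simp

lemma orth_lt (a b : ℝ) (ha : -1 < a) (hb : -1 < b) (n i : ℕ) (h : i < n) :
    LL a b ha hb (jacobiP a b n * jacobiP a b i) = 0 := by
  rw [LL_iter, der_over a b ha hb n i h, map_zero, mul_zero]

lemma orth (a b : ℝ) (ha : -1 < a) (hb : -1 < b) (n i : ℕ) (h : n ≠ i) :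
    LL a b ha hb (jacobiP a b n * jacobiP a b i) = 0 := by
  rcases lt_or_gt_of_ne h with h | h
  · rw [mul_comm]; exact orth_lt a b ha hb i n h
  · exact orth_lt a b ha hb n i h

lemma norm_eq (a b : ℝ) (ha : -1 < a) (hb : -1 < b) (n : ℕ) :
    LL a b ha hb (jacobiP a b n * jacobiP a b n) = jacobiNormSq a b n := by
  rw [LL_apply, jacobiNormSq]
  simp only [eval_mul, pow_two, mul_assoc]

lemma norm_formula (a b : ℝ) (ha : -1 < a) (hb : -1 < b) (n : ℕ) :
    jacobiNormSq a b n = (1 / (2 ^ n * n.factorial)) *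
      (ddf (a+b) n n * LL (a+n) (b+n) (gt_add ha n) (gt_add hb n) 1) := by
  rw [← norm_eq a b ha hb, LL_iter, der_full a b ha hb, ← LL_C_mul _ _ _ _ (ddf _ _ _) 1, mul_one]

lemma norm_pos (a b : ℝ) (ha : -1 < a) (hb : -1 < b) (n : ℕ) : 0 < jacobiNormSq a b n := by
  rw [norm_formula a b ha hb]
  have h1 := LL_pos (a+n) (b+n) (gt_add ha n) (gt_add hb n)
  have h2 : 0 < ddf (a+b) n n := by
    rcases Nat.eq_zero_or_pos n with rfl | hn
    · simp [ddf]
    · exact ddf_pos _ (by linarith) _ _ hn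
  positivity

lemma norm_rec_aux (a b x B D D' F : ℝ) (h1 : x + 1 ≠ 0) (p1 : a + x + (b + x) + 2 ≠ 0)
    (p2 : a + x + (b + x) + 3 ≠ 0)
    (d : D' * (x + (a+b) + 1) = D * (2*x+(a+b)+1) * (a + x + (b + x) + 2) / 2) :
    F / (2 * (x+1)) * (D' * (4 * (a+x+1) * (b+x+1) / ((a + x + (b + x) + 2) * (a + x + (b + x) + 3)) * B))
      * ((x+(a+b)+1) * (x+1) * (x + (a+b+3)/2)) =
    F * (D * B) * ((x + (a+b+1)/2) * (x+a+1) * (x+b+1)) := by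
  have e : F / (2 * (x+1)) * (D' * (4 * (a+x+1) * (b+x+1) / ((a + x + (b + x) + 2) * (a + x + (b + x) + 3)) * B))
      * ((x+(a+b)+1) * (x+1) * (x + (a+b+3)/2)) =
    F * B * (a+x+1) * (b+x+1) * (D' * (x + (a+b) + 1)) * ((x+1) / (x+1)) *
      ((a + x + (b + x) + 3) / (a + x + (b + x) + 3)) / (a + x + (b + x) + 2) := by
    simp only [div_eq_mul_inv, mul_inv]
    ring
  rw [e, d, div_self h1, div_self p2, div_eq_iff p1]
  ring

lemma norm_rec (a b : ℝ) (ha : -1 < a) (hb : -1 < b) (n : ℕ) :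
    jacobiNormSq a b (n+1) * ((n+(a+b)+1) * (n+1) * (n + (a+b+3)/2)) =
      jacobiNormSq a b n * ((n + (a+b+1)/2) * (n+a+1) * (n+b+1)) := by
  rw [norm_formula a b ha hb, norm_formula a b ha hb]
  have e := LL_one_rec (a+n) (b+n) (gt_add ha n) (gt_add hb n)
    (by linarith [gt_add ha n]) (by linarith [gt_add hb n])
  rw [LL_congr _ _ (gt_add ha (n+1)) (gt_add hb (n+1)) (by push_cast; ring) (by push_cast; ring)] at e
  rw [e]
  have d := ddf_succ (a+b) n (n+1)
  rw [ddf_succ' _ n (n+1), ddf_succ' _ n n] at d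
  set B := LL (a+n) (b+n) (gt_add ha n) (gt_add hb n) 1
  set D' := ddf (a+b) (n+1) (n+1)
  set D := ddf (a+b) n n
  have h0 : (0:ℝ) ≤ n := by positivity
  have p1 : a + n + (b + n) + 2 ≠ 0 := by linarith [gt_add ha n, gt_add hb n]
  have p2 : a + n + (b + n) + 3 ≠ 0 := by linarith [gt_add ha n, gt_add hb n]
  have hF : (1:ℝ) / (2 ^ (n+1) * (n+1).factorial) = 1 / (2 ^ n * n.factorial) / (2 * (n+1)) := by
    rw [Nat.factorial_succ]
    push_cast
    field_simp
    ring
  rw [hF]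
  generalize (1:ℝ) / (2 ^ n * n.factorial) = F
  clear_value B D D'
  push_cast at d
  exact norm_rec_aux a b n B D D' F (by positivity) p1 p2 (by linear_combination 2 * d)

/-- value of the derivative at one -/
noncomputable def pv (a b : ℝ) (j n : ℕ) : ℝ := (derivative^[j] (jacobiP a b n)).eval 1

lemma jacobiP_one (a b : ℝ) (m : ℕ) : (jacobiP a b m).eval 1 = jcoef a b m 0 := by
  rw [jacobiP_eq, Finset.sum_range_succ']
  simp [uu, vv, eval_finsetSum]
  norm_num

lemma jcoef_zero (a b : ℝ) (hb : -1 < b) (m : ℕ) :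
    jcoef a b m 0 = Real.Gamma (m + a + 1) / (Real.Gamma (m + 1) * Real.Gamma (a + 1)) := by
  have h1 : Real.Gamma (m + b + 1) ≠ 0 := (Real.Gamma_pos_of_pos (by linarith [gt_add hb m])).ne'
  simp [jcoef, h1]

lemma jcoef_zero_pos (a b : ℝ) (ha : -1 < a) (hb : -1 < b) (m : ℕ) : 0 < jcoef a b m 0 := by
  rw [jcoef_zero a b hb]
  have h1 := Real.Gamma_pos_of_pos (s := m + a + 1) (by linarith [gt_add ha m])
  have h2 := Real.Gamma_pos_of_pos (s := m + 1) (by positivity)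
  have h3 := Real.Gamma_pos_of_pos (s := a + 1) (by linarith)
  positivity

lemma jcoef_zero_rec (a b : ℝ) (ha : -1 < a) (hb : -1 < b) (m : ℕ) :
    jcoef a b (m+1) 0 * (m+1) = jcoef a b m 0 * (m + a + 1) := by
  rw [jcoef_zero a b hb, jcoef_zero a b hb]
  push_cast
  have h2 := Real.Gamma_pos_of_pos (s := (m:ℝ) + 1) (by positivity)
  have h3 := Real.Gamma_pos_of_pos (s := a + 1) (by linarith)
  rw [Real.Gamma_add_one (s := (m:ℝ)+1) (by positivity),
    show (m:ℝ) + 1 + a + 1 = m + a + 1 + 1 by ring,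
    Real.Gamma_add_one (s := (m:ℝ)+a+1) (by linarith [gt_add ha m])]
  field_simp

lemma pv_eq (a b : ℝ) (ha : -1 < a) (hb : -1 < b) (j m : ℕ) :
    pv a b j (m+j) = ddf (a+b) (m+j) j * jcoef (a+j) (b+j) m 0 := by
  rw [pv, der_iter j m a b ha hb, eval_C_mul, jacobiP_one]

lemma pv_pos (a b : ℝ) (ha : -1 < a) (hb : -1 < b) (j n : ℕ) (h : j ≤ n) (h1 : 1 ≤ n) :
    0 < pv a b j n := by
  obtain ⟨m, rfl⟩ := Nat.exists_eq_add_of_le' h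
  rw [pv_eq a b ha hb]
  exact mul_pos (ddf_pos _ (by linarith) _ _ h1) (jcoef_zero_pos _ _ (gt_add ha j) (gt_add hb j) m)

lemma pv_rec (a b : ℝ) (ha : -1 < a) (hb : -1 < b) (j n : ℕ) (h : j ≤ n) :
    pv a b j (n+1) * ((n+(a+b)+1) * (n-j+1)) = pv a b j n * ((n+a+1)*(n+(a+b)+1+j)) := by
  obtain ⟨m, rfl⟩ := Nat.exists_eq_add_of_le' h
  rw [pv_eq a b ha hb, show m + j + 1 = (m+1) + j by ring, pv_eq a b ha hb]
  have d := ddf_succ (a+b) (m+j) j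
  rw [ddf_succ'] at d
  have e := jcoef_zero_rec (a+j) (b+j) (gt_add ha j) (gt_add hb j) m
  rw [show (m+1) + j = m + j + 1 by ring]
  push_cast at *
  set A := jcoef (a+j) (b+j) m 0
  set A' := jcoef (a+j) (b+j) (m+1) 0
  set D := ddf (a+b) (m+j) j
  set D' := ddf (a+b) (m+j+1) j
  linear_combination (D' * (m + j + (a+b) + 1)) * e + 2 * A * (m + j + a + 1) * d

lemma growth (b : ℕ → ℝ) (h0 : ∀ n, 0 ≤ b n) (hp : ∀ᶠ n in atTop, 0 < b n)
    (hr : Tendsto (fun n => b (n+1) / b n) atTop (nhds 1)) (K : ℕ) :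
    ∀ᶠ n in atTop, (K:ℝ) / 2 * b n ≤ ∑ i ∈ Finset.range n, b i := by
  induction K with
  | zero =>
    refine Eventually.of_forall fun n => ?_
    simpa using Finset.sum_nonneg fun i _ => h0 i
  | succ K ih =>
    have h1 : ∀ᶠ n in atTop, b (n+1) / b n < ((K:ℝ)+2)/(K+1) := by
      refine hr.eventually_lt_const ?_
      rw [lt_div_iff₀ (by positivity)]; linarith
    have h2 : ∀ᶠ n in atTop, ((K+1:ℕ):ℝ) / 2 * b (n+1) ≤ ∑ i ∈ Finset.range (n+1), b i := by
      filter_upwards [ih, h1, hp] with n a1 a2 a3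
      rw [div_lt_div_iff₀ a3 (by positivity)] at a2
      rw [Finset.sum_range_succ]
      push_cast
      linarith
    obtain ⟨N, hN⟩ := eventually_atTop.1 h2
    refine eventually_atTop.2 ⟨N+1, fun n hn => ?_⟩
    obtain ⟨m, rfl⟩ : ∃ m, n = m + 1 := ⟨n-1, by omega⟩
    exact hN m (by omega)

lemma lin_ratio (x y : ℝ) : Tendsto (fun n : ℕ => ((n:ℝ) + x) / (n + y)) atTop (nhds 1) := by
  have h : Tendsto (fun n : ℕ => 1 + (x - y) / ((n:ℝ) + y)) atTop (nhds (1 + 0)) := by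
    refine tendsto_const_nhds.add (Tendsto.const_div_atTop ?_ _)
    exact tendsto_atTop_add_const_right _ _ tendsto_natCast_atTop_atTop
  rw [add_zero] at h
  refine h.congr' ?_
  have : ∀ᶠ n : ℕ in atTop, -y < (n:ℝ) := tendsto_natCast_atTop_atTop.eventually_gt_atTop _
  filter_upwards [this] with n hn
  have : (n:ℝ) + y ≠ 0 := by linarith
  field_simp
  ring

lemma ratio_lim (a b : ℝ) (ha : -1 < a) (hb : -1 < b) (j : ℕ) :
    Tendsto (fun n => (pv a b j (n+1) * pv a b j (n+1) / jacobiNormSq a b (n+1)) /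
      (pv a b j n * pv a b j n / jacobiNormSq a b n)) atTop (nhds 1) := by
  have r1 := (lin_ratio (a+1) (a+b+1)).mul (lin_ratio (a+b+1+j) (1-j))
  have r2 := ((lin_ratio (a+b+1) (a+1)).mul (lin_ratio 1 (b+1))).mul (lin_ratio ((a+b+3)/2) ((a+b+1)/2))
  have r := (r1.mul r1).mul r2
  simp only [mul_one] at r
  refine r.congr' ?_
  filter_upwards [eventually_ge_atTop (max j 1)] with n hn
  have hj : j ≤ n := le_trans (le_max_left _ _) hn
  have h1 : 1 ≤ n := le_trans (le_max_right _ _) hn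
  have hj' : (j:ℝ) ≤ n := by exact_mod_cast hj
  have h1' : (1:ℝ) ≤ n := by exact_mod_cast h1
  have e1 := pv_rec a b ha hb j n hj
  have e2 := norm_rec a b ha hb n
  have q1 := (pv_pos a b ha hb j n hj h1).ne'
  have q2 := (norm_pos a b ha hb n).ne'
  have c1 : (n:ℝ) + (a+b) + 1 ≠ 0 := by linarith
  have c2 : (n:ℝ) - j + 1 ≠ 0 := by linarith
  have c3 : (n:ℝ) + 1 ≠ 0 := by linarith
  have c4 : (n:ℝ) + (a+b+3)/2 ≠ 0 := by linarith
  have c5 : (n:ℝ) + (a+b+1)/2 ≠ 0 := by linarith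
  have c6 : (n:ℝ) + a + 1 ≠ 0 := by linarith
  have c7 : (n:ℝ) + b + 1 ≠ 0 := by linarith
  have f1 : pv a b j (n+1) = pv a b j n * (((n+a+1)*(n+(a+b)+1+j)) / ((n+(a+b)+1) * (n-j+1))) := by
    rw [← mul_div_assoc, eq_div_iff (mul_ne_zero c1 c2), e1]
  have f2 : jacobiNormSq a b (n+1) = jacobiNormSq a b n * (((n + (a+b+1)/2) * (n+a+1) * (n+b+1)) / ((n+(a+b)+1) * (n+1) * (n + (a+b+3)/2))) := by
    rw [← mul_div_assoc, eq_div_iff (mul_ne_zero (mul_ne_zero c1 c3) c4), e2]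
  rw [f1, f2]
  generalize pv a b j n = P at *
  generalize jacobiNormSq a b n = H at *
  rw [show (n:ℝ) + (a+1) = n+a+1 by ring, show (n:ℝ) + (a+b+1) = n+(a+b)+1 by ring,
    show (n:ℝ) + (a+b+1+j) = n+(a+b)+1+j by ring, show (n:ℝ) + (1-j) = n-j+1 by ring,
    show (n:ℝ) + (b+1) = n+b+1 by ring]
  generalize (n:ℝ)+(a+b)+1+j = c8
  generalize (n:ℝ)+(a+b)+1 = c1 at *
  generalize (n:ℝ)-j+1 = c2 at *
  generalize (n:ℝ)+1 = c3 at *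
  generalize (n:ℝ)+(a+b+3)/2 = c4 at *
  generalize (n:ℝ)+(a+b+1)/2 = c5 at *
  generalize (n:ℝ)+a+1 = c6 at *
  generalize (n:ℝ)+b+1 = c7 at *
  clear e1 e2 f1 f2
  field_simp

lemma kern_eq (a b : ℝ) (j n : ℕ) (hn : 1 ≤ n) : kernK a b j j (n-1) 1 1 =
    ∑ i ∈ Finset.range n, pv a b j i * pv a b j i / jacobiNormSq a b i := by
  rw [kernK, Nat.sub_add_cancel hn]; rfl

lemma kernPoly_eq (a b : ℝ) (j n : ℕ) (hn : 1 ≤ n) : kernKPoly a b j (n-1) =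
    ∑ i ∈ Finset.range n, C (pv a b j i / jacobiNormSq a b i) * jacobiP a b i := by
  rw [kernKPoly, Nat.sub_add_cancel hn]; rfl

lemma LL_P_kern (a b : ℝ) (ha : -1 < a) (hb : -1 < b) (j n m : ℕ) (hn : 1 ≤ n) :
    LL a b ha hb (jacobiP a b m * kernKPoly a b j (n-1)) = if m < n then pv a b j m else 0 := by
  rw [kernPoly_eq a b j n hn, Finset.mul_sum, map_sum]
  have : ∀ i ∈ Finset.range n, LL a b ha hb (jacobiP a b m * (C (pv a b j i / jacobiNormSq a b i) * jacobiP a b i))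
      = if m = i then pv a b j i else 0 := by
    intro i _
    rw [mul_left_comm, LL_C_mul]
    split_ifs with h
    · subst h
      rw [norm_eq, div_mul_cancel₀ _ (norm_pos a b ha hb m).ne']
    · rw [orth a b ha hb m i h, mul_zero]
  rw [Finset.sum_congr rfl this]
  simp

lemma LL_kern_kern (a b : ℝ) (ha : -1 < a) (hb : -1 < b) (j n : ℕ) (hn : 1 ≤ n) :
    LL a b ha hb (kernKPoly a b j (n-1) * kernKPoly a b j (n-1)) = kernK a b j j (n-1) 1 1 := by
  conv_lhs => rw [kernPoly_eq a b j n hn]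
  rw [← kernPoly_eq a b j n hn, kern_eq a b j n hn]
  conv_lhs => enter [2, 1]; rw [kernPoly_eq a b j n hn]
  rw [Finset.sum_mul, map_sum]
  refine Finset.sum_congr rfl fun i hi => ?_
  rw [mul_assoc, LL_C_mul, LL_P_kern a b ha hb j n i hn, if_pos (Finset.mem_range.1 hi)]
  ring

lemma der_kern (a b : ℝ) (j n : ℕ) (hn : 1 ≤ n) :
    (derivative^[j] (kernKPoly a b j (n-1))).eval 1 = kernK a b j j (n-1) 1 1 := by
  rw [kernPoly_eq a b j n hn, kern_eq a b j n hn, iterate_derivative_sum, eval_finsetSum]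
  refine Finset.sum_congr rfl fun i hi => ?_
  rw [iterate_derivative_C_mul, eval_C_mul]
  simp only [pv]
  ring

lemma sob_eq (a b : ℝ) (ha : -1 < a) (hb : -1 < b) (j n : ℕ) (hn : 1 ≤ n) (Ms : ℕ → ℝ)
    (hM : 0 ≤ Ms n) (hK : 0 ≤ kernK a b j j (n-1) 1 1) :
    sobInner a b j (Ms n) (sobQ a b j Ms n) (sobQ a b j Ms n) =
      jacobiNormSq a b n + Ms n * (pv a b j n * pv a b j n) / (1 + Ms n * kernK a b j j (n-1) 1 1) := by
  have e1 := LL_P_kern a b ha hb j n n hn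
  rw [if_neg (lt_irrefl _)] at e1
  have e2 := LL_kern_kern a b ha hb j n hn
  have e3 := der_kern a b j n hn
  have e4 := norm_eq a b ha hb n
  have hL : ∀ f : ℝ[X], (∫ x in (-1 : ℝ)..1, f.eval x * f.eval x * (1 - x) ^ a * (1 + x) ^ b) =
      LL a b ha hb (f * f) := by
    intro f
    rw [LL_apply]
    simp only [eval_mul, mul_assoc]
  rw [sobInner, hL]
  unfold sobQ
  rw [show (derivative^[j] (jacobiP a b n)).eval 1 = pv a b j n from rfl, iterate_derivative_sub,
    iterate_derivative_C_mul, eval_sub, eval_C_mul, e3,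
    show (derivative^[j] (jacobiP a b n)).eval 1 = pv a b j n from rfl]
  generalize kernKPoly a b j (n-1) = KP at *
  generalize kernK a b j j (n-1) 1 1 = K at *
  generalize jacobiP a b n = P at *
  generalize pv a b j n = p at *
  generalize Ms n = m at *
  have hd : 1 + m * K ≠ 0 := by positivity
  generalize hc : m * p / (1 + m * K) = c
  rw [show (P - C c * KP) * (P - C c * KP) = P * P + C (-2 * c) * (P * KP) + C (c^2) * (KP * KP) by
      simp only [map_mul, map_neg, map_ofNat, map_pow]; ring,
    map_add, map_add, LL_C_mul, LL_C_mul, e1, e2, e4, ← hc]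
  field_simp
  ring

/-- `(Q_n,Q_n)_{S,n} ≈ ‖P_n^{(α,β)}‖²`. -/
theorem sobQ_normSq_ratio (α β : ℝ) (hα : -1 < α) (hβ : -1 < β) (j : ℕ)
    (γ M : ℝ) (hM : 0 < M) (Ms : ℕ → ℝ) (hMs : ∀ n, 0 ≤ Ms n)
    (hlim : Filter.Tendsto (fun n : ℕ => Ms n * (n : ℝ) ^ γ) Filter.atTop (nhds M)) :
    Filter.Tendsto
      (fun n : ℕ => sobInner α β j (Ms n) (sobQ α β j Ms n) (sobQ α β j Ms n) /
        jacobiNormSq α β n)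
      Filter.atTop (nhds 1) := by
  have hn0 : ∀ i, 0 ≤ pv α β j i * pv α β j i / jacobiNormSq α β i := fun i =>
    div_nonneg (mul_self_nonneg _) (norm_pos α β hα hβ i).le
  have hgrow := growth (fun i => pv α β j i * pv α β j i / jacobiNormSq α β i) hn0
    (by
      filter_upwards [eventually_ge_atTop (max j 1)] with n hn
      have h1 := pv_pos α β hα hβ j n (le_trans (le_max_left _ _) hn)
        (le_trans (le_max_right _ _) hn)
      have h2 := norm_pos α β hα hβ n
      positivity)
    (ratio_lim α β hα hβ j)
  rw [Metric.tendsto_nhds]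
  intro ε hε
  obtain ⟨K, hK⟩ := exists_nat_gt (2 / ε)
  have hK0 : (0:ℝ) < K := lt_trans (by positivity) hK
  filter_upwards [hgrow K, eventually_ge_atTop 1] with n hg hn
  rw [← kern_eq α β j n hn] at hg
  have hS : 0 ≤ kernK α β j j (n-1) 1 1 := by
    rw [kern_eq α β j n hn]
    exact Finset.sum_nonneg fun i _ => hn0 i
  have hh := norm_pos α β hα hβ n
  rw [sob_eq α β hα hβ j n hn Ms (hMs n) hS]
  have hm := hMs n
  have ha := hn0 n
  generalize kernK α β j j (n-1) 1 1 = S at *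
  generalize Ms n = m at *
  have e : (jacobiNormSq α β n + m * (pv α β j n * pv α β j n) / (1 + m * S)) / jacobiNormSq α β n - 1
      = m * (pv α β j n * pv α β j n / jacobiNormSq α β n) / (1 + m * S) := by
    have : 1 + m * S ≠ 0 := by positivity
    field_simp
    ring
  rw [Real.dist_eq, e]
  generalize pv α β j n * pv α β j n / jacobiNormSq α β n = A at *
  have hd : 0 < 1 + m * S := by positivity
  rw [abs_of_nonneg (by positivity), div_lt_iff₀ hd]
  have h2 : 2 < K * ε := by rwa [div_lt_iff₀ hε] at hK
  have h3 : m * ((K:ℝ) / 2 * A) ≤ m * S := mul_le_mul_of_nonneg_left hg hm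
  have h4 : m * A ≤ ε * ((K:ℝ) / 2 * (m * A)) := by
    have : 0 ≤ m * A := by positivity
    nlinarith
  have h5 : ε * (m * ((K:ℝ) / 2 * A)) ≤ ε * (m * S) := mul_le_mul_of_nonneg_left h3 hε.le
  linarith
end

section
/- For all real α, β > −1, every j ∈ ℕ, every sequence (M_n) of nonnegative reals, and every n ≥ j+1, there exist real numbers b_0(n), b_1(n), …, b_{j+1}(n), not all zero, such that Q_n(x) = Σ_{i=0}^{j+1} b_i(n)·(1−x)^i·P_{n−i}^{(α+2i,β)}(x) as an identity of polynomials. -/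
open Polynomial Filter

section JacobiAux

open MeasureTheory Set

/-- Weighted integral functional. -/
noncomputable def jInt (α β : ℝ) (f : Polynomial ℝ) : ℝ :=
  ∫ x in (-1 : ℝ)..1, f.eval x * (1 - x) ^ α * (1 + x) ^ β

lemma jWeight_integrable {α β : ℝ} (hα : -1 < α) (hβ : -1 < β) :
    IntervalIntegrable (fun x : ℝ => (1 - x) ^ α * (1 + x) ^ β) volume (-1) 1 := by
  have h1 : IntervalIntegrable (fun x : ℝ => (1 - x) ^ α) volume 0 1 := by
    have := ((intervalIntegral.intervalIntegrable_rpow' (a := 0) (b := 1) hα).comp_sub_left 1).symm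
    simpa using this
  have h2 : IntervalIntegrable (fun x : ℝ => (1 + x) ^ β) volume (-1) 0 := by
    have := (intervalIntegral.intervalIntegrable_rpow' (a := 0) (b := 1) hβ).comp_add_left 1
    simpa using this
  refine IntervalIntegrable.trans (b := 0) ?_ ?_
  · refine h2.continuousOn_mul ?_
    intro x hx
    rw [uIcc_of_le (by norm_num)] at hx
    refine ContinuousAt.continuousWithinAt ?_
    refine ContinuousAt.rpow_const (by fun_prop) (Or.inl ?_)
    have := hx.2
    intro h; linarith
  · refine h1.mul_continuousOn ?_
    intro x hx
    rw [uIcc_of_le (by norm_num)] at hx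
    refine ContinuousAt.continuousWithinAt ?_
    refine ContinuousAt.rpow_const (by fun_prop) (Or.inl ?_)
    have := hx.1
    intro h; linarith

lemma jInt_integrable {α β : ℝ} (hα : -1 < α) (hβ : -1 < β) (f : Polynomial ℝ) :
    IntervalIntegrable (fun x : ℝ => f.eval x * (1 - x) ^ α * (1 + x) ^ β) volume (-1) 1 := by
  have := (jWeight_integrable hα hβ).continuousOn_mul (g := fun x => f.eval x)
    (f.continuous.continuousOn)
  simpa [mul_assoc] using this

lemma jInt_add {α β : ℝ} (hα : -1 < α) (hβ : -1 < β) (f g : Polynomial ℝ) :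
    jInt α β (f + g) = jInt α β f + jInt α β g := by
  unfold jInt
  rw [← intervalIntegral.integral_add (jInt_integrable hα hβ f) (jInt_integrable hα hβ g)]
  congr 1
  ext x
  simp only [eval_add]; ring

lemma jInt_C_mul (α β c : ℝ) (f : Polynomial ℝ) :
    jInt α β (C c * f) = c * jInt α β f := by
  unfold jInt
  rw [← intervalIntegral.integral_const_mul]
  congr 1
  ext x
  simp only [eval_mul, eval_C]; ring

lemma jInt_zero (α β : ℝ) : jInt α β 0 = 0 := by
  simp [jInt]

lemma jInt_sub {α β : ℝ} (hα : -1 < α) (hβ : -1 < β) (f g : Polynomial ℝ) :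
    jInt α β (f - g) = jInt α β f - jInt α β g := by
  have h := jInt_add hα hβ (f - g) g
  rw [sub_add_cancel] at h
  linarith

lemma jInt_sum {α β : ℝ} (hα : -1 < α) (hβ : -1 < β) {ι : Type*} (s : Finset ι)
    (f : ι → Polynomial ℝ) :
    jInt α β (∑ i ∈ s, f i) = ∑ i ∈ s, jInt α β (f i) := by
  classical
  induction s using Finset.induction_on with
  | empty => simp [jInt_zero]
  | insert a s ha ih => rw [Finset.sum_insert ha, Finset.sum_insert ha, jInt_add hα hβ, ih]

/-- Absorbing factors into the weight. -/
lemma jInt_shift (α β : ℝ) (p q : ℕ) (f : Polynomial ℝ) :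
    jInt α β ((1 - X) ^ p * (1 + X) ^ q * f) = jInt (α + p) (β + q) f := by
  unfold jInt
  rw [intervalIntegral.integral_of_le (by norm_num), intervalIntegral.integral_of_le (by norm_num),
    integral_Ioc_eq_integral_Ioo, integral_Ioc_eq_integral_Ioo]
  refine setIntegral_congr_fun measurableSet_Ioo fun x hx => ?_
  have h1 : 0 < 1 - x := by linarith [hx.2]
  have h2 : 0 < 1 + x := by linarith [hx.1]
  simp only [eval_mul, eval_pow, eval_sub, eval_add, eval_one, eval_X]
  rw [Real.rpow_add h1, Real.rpow_add h2, Real.rpow_natCast, Real.rpow_natCast]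
  ring

lemma beta_real {a b : ℝ} (ha : 0 < a) (hb : 0 < b) :
    ∫ x in (0 : ℝ)..1, x ^ (a - 1) * (1 - x) ^ (b - 1) =
      Real.Gamma a * Real.Gamma b / Real.Gamma (a + b) := by
  have h := ProbabilityTheory.beta_eq_betaIntegralReal a b ha hb
  rw [ProbabilityTheory.beta] at h
  rw [h, Complex.betaIntegral]
  have : (∫ x : ℝ in (0:ℝ)..1, (x : ℂ) ^ ((a : ℂ) - 1) * (1 - (x : ℂ)) ^ ((b : ℂ) - 1)) =
      ∫ x : ℝ in (0:ℝ)..1, ((x ^ (a - 1) * (1 - x) ^ (b - 1) : ℝ) : ℂ) := by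
    refine intervalIntegral.integral_congr fun x hx => ?_
    rw [uIcc_of_le (by norm_num)] at hx
    rw [Complex.ofReal_mul, Complex.ofReal_cpow hx.1,
      Complex.ofReal_cpow (by linarith [hx.2] : (0:ℝ) ≤ 1 - x)]
    push_cast
    rfl
  rw [this, intervalIntegral.integral_ofReal, Complex.ofReal_re]

lemma jInt_one {α β : ℝ} (hα : -1 < α) (hβ : -1 < β) :
    jInt α β 1 = 2 ^ (α + β + 1) *
      (Real.Gamma (α + 1) * Real.Gamma (β + 1) / Real.Gamma (α + β + 2)) := by
  have hb := beta_real (a := β + 1) (b := α + 1) (by linarith) (by linarith)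
  have hs := intervalIntegral.integral_comp_mul_sub (a := 0) (b := 1) (c := 2)
    (fun x : ℝ => (1 - x) ^ α * (1 + x) ^ β) (by norm_num) 1
  have e : (∫ x in (0:ℝ)..1, (1 - (2 * x - 1)) ^ α * (1 + (2 * x - 1)) ^ β) =
      2 ^ (α + β) * ∫ x in (0 : ℝ)..1, x ^ (β + 1 - 1) * (1 - x) ^ (α + 1 - 1) := by
    rw [← intervalIntegral.integral_const_mul]
    refine intervalIntegral.integral_congr fun x hx => ?_
    rw [uIcc_of_le (by norm_num)] at hx
    rw [show 1 - (2 * x - 1) = 2 * (1 - x) by ring, show 1 + (2 * x - 1) = 2 * x by ring,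
      Real.mul_rpow (by norm_num) (by linarith [hx.2]), Real.mul_rpow (by norm_num) hx.1,
      Real.rpow_add (by norm_num)]
    simp only [add_sub_cancel_right]
    ring
  rw [e, hb] at hs
  have : jInt α β 1 = ∫ x in (-1 : ℝ)..1, (1 - x) ^ α * (1 + x) ^ β := by
    simp [jInt]
  rw [this, Real.rpow_add (by norm_num), Real.rpow_one]
  rw [show (2:ℝ) * 0 - 1 = -1 by norm_num, show (2:ℝ) * 1 - 1 = 1 by norm_num, smul_eq_mul] at hs
  rw [show α + β + 2 = β + 1 + (α + 1) by ring]
  linear_combination (-2) * hs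

lemma jInt_mono {α β : ℝ} (hα : -1 < α) (hβ : -1 < β) (p q : ℕ) :
    jInt α β ((1 - X) ^ p * (1 + X) ^ q) = 2 ^ (α + β + p + q + 1) *
      (Real.Gamma (α + p + 1) * Real.Gamma (β + q + 1) / Real.Gamma (α + β + p + q + 2)) := by
  have h := jInt_shift α β p q 1
  rw [mul_one] at h
  have hp : (0:ℝ) ≤ p := Nat.cast_nonneg p
  have hq : (0:ℝ) ≤ q := Nat.cast_nonneg q
  rw [h, jInt_one (by linarith) (by linarith)]
  rw [show α + p + (β + q) = α + β + p + q by ring]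

lemma Gamma_add_nat {b : ℝ} (hb : 0 < b) (m : ℕ) :
    Real.Gamma (b + m) = Real.Gamma b * (ascPochhammer ℝ m).eval b := by
  induction m with
  | zero => simp
  | succ m ih =>
    have : b + m ≠ 0 := by positivity
    rw [ascPochhammer_succ_eval, Nat.cast_succ, ← add_assoc, Real.Gamma_add_one this, ih]; ring

lemma alt_sum_zero (b : ℝ) {m n : ℕ} (h : m < n) :
    ∑ k ∈ Finset.range (n + 1),
      (-1 : ℝ) ^ k * (n.choose k) * (ascPochhammer ℝ m).eval (b + ((n - k : ℕ) : ℝ)) = 0 := by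
  have h1 := Polynomial.fwdDiff_iter_eq_zero_of_degree_lt (R := ℝ) (P := ascPochhammer ℝ m) (n := n)
    (by simpa using h)
  have h2 := congrFun h1 b
  rw [fwdDiff_iter_eq_sum_shift, ← Finset.sum_flip] at h2
  rw [← Pi.zero_apply (M := fun _ : ℝ => ℝ) b, ← h2]
  refine Finset.sum_congr rfl fun k hk => ?_
  have hk' : k ≤ n := by simpa [Nat.lt_succ_iff] using hk
  rw [Nat.sub_sub_self hk', Nat.choose_symm hk']
  simp

lemma jacobiP_orth_mono {α β : ℝ} (hα : -1 < α) (hβ : -1 < β) {m n : ℕ} (h : m < n) :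
    jInt α β (jacobiP α β n * (1 + X) ^ m) = 0 := by
  have key : jacobiP α β n * (1 + X) ^ m = ∑ k ∈ Finset.range (n + 1),
      C (Real.Gamma (n + α + 1) / (Real.Gamma ((n : ℝ) - k + 1) * Real.Gamma (α + k + 1)) *
        (Real.Gamma (n + β + 1) / (Real.Gamma ((k : ℝ) + 1) * Real.Gamma ((n : ℝ) - k + β + 1)))
        * ((-1) ^ k * 2⁻¹ ^ n)) * ((1 - X) ^ k * (1 + X) ^ (n - k + m)) := by
    unfold jacobiP
    rw [Finset.sum_mul]
    refine Finset.sum_congr rfl fun k hk => ?_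
    have hk' : k ≤ n := by simpa [Nat.lt_succ_iff] using hk
    have e : (X - 1 : Polynomial ℝ) = C (-1) * (1 - X) := by simp
    have e2 : (2⁻¹ : ℝ) ^ n = 2⁻¹ ^ k * 2⁻¹ ^ (n - k) := by rw [← pow_add]; congr 1; omega
    rw [e, e2]
    simp only [C_mul, C_pow, mul_pow, pow_add]
    rw [add_comm X 1]
    ring
  rw [key, jInt_sum hα hβ]
  have hG : ∀ k ∈ Finset.range (n + 1), jInt α β (C (Real.Gamma (n + α + 1) / (Real.Gamma ((n : ℝ) - k + 1) * Real.Gamma (α + k + 1)) *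
        (Real.Gamma (n + β + 1) / (Real.Gamma ((k : ℝ) + 1) * Real.Gamma ((n : ℝ) - k + β + 1)))
        * ((-1) ^ k * 2⁻¹ ^ n)) * ((1 - X) ^ k * (1 + X) ^ (n - k + m))) =
      (Real.Gamma (n + α + 1) * Real.Gamma (n + β + 1) * 2⁻¹ ^ n * 2 ^ (α + β + n + m + 1) /
        Real.Gamma (α + β + n + m + 2) / n.factorial) *
      ((-1 : ℝ) ^ k * (n.choose k) * (ascPochhammer ℝ m).eval (β + 1 + ((n - k : ℕ) : ℝ))) := by
    intro k hk
    have hk' : k ≤ n := by simpa [Nat.lt_succ_iff] using hk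
    have hkn : (0 : ℝ) ≤ ((n - k : ℕ) : ℝ) := Nat.cast_nonneg _
    have hk0 : (0 : ℝ) ≤ (k : ℝ) := Nat.cast_nonneg _
    have hc : (n : ℝ) - k = ((n - k : ℕ) : ℝ) := by rw [Nat.cast_sub hk']
    rw [jInt_C_mul, jInt_mono hα hβ]
    have e1 : α + β + (k:ℝ) + ((n - k + m : ℕ) : ℝ) = α + β + n + m := by
      rw [Nat.cast_add, ← hc]; ring
    have e2 : β + ((n - k + m : ℕ) : ℝ) + 1 = (β + 1 + ((n - k : ℕ) : ℝ)) + m := by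
      rw [Nat.cast_add]; ring
    rw [e1, e2, Gamma_add_nat (by linarith), hc, Real.Gamma_nat_eq_factorial,
      Real.Gamma_nat_eq_factorial, show ((n - k : ℕ) : ℝ) + β + 1 = β + 1 + ((n - k : ℕ) : ℝ) by ring,
      Nat.cast_choose ℝ hk']
    have g1 : Real.Gamma (α + k + 1) ≠ 0 := (Real.Gamma_pos_of_pos (by linarith)).ne'
    have g2 : Real.Gamma (β + 1 + ((n - k : ℕ) : ℝ)) ≠ 0 :=
      (Real.Gamma_pos_of_pos (by linarith)).ne'
    have f1 : (k.factorial : ℝ) ≠ 0 := by positivity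
    have f2 : ((n - k).factorial : ℝ) ≠ 0 := by positivity
    have f3 : (n.factorial : ℝ) ≠ 0 := by positivity
    field_simp
  rw [Finset.sum_congr rfl hG, ← Finset.mul_sum, alt_sum_zero _ h, mul_zero]

lemma jacobiP_orth {α β : ℝ} (hα : -1 < α) (hβ : -1 < β) {n : ℕ} (f : Polynomial ℝ)
    (hf : f.degree < n) : jInt α β (jacobiP α β n * f) = 0 := by
  by_cases h0 : f = 0
  · simp [h0, jInt_zero]
  rw [← natDegree_lt_iff_degree_lt h0] at hf
  have e : f = ∑ i ∈ Finset.range n, C ((f.comp (X - 1)).coeff i) * (1 + X) ^ i := by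
    have h1 : f = (f.comp (X - 1)).comp (1 + X) := by
      rw [comp_assoc]; simp
    have h3 := natDegree_comp (p := f) (q := X - 1)
    rw [← C_1, natDegree_X_sub_C, mul_one, C_1] at h3
    conv_lhs => rw [h1, comp]
    exact eval₂_eq_sum_range' C (by rw [h3]; exact hf) _
  rw [e, Finset.mul_sum, jInt_sum hα hβ]
  refine Finset.sum_eq_zero fun i hi => ?_
  rw [mul_left_comm, jInt_C_mul, jacobiP_orth_mono hα hβ (Finset.mem_range.1 hi), mul_zero]

lemma jInt_sq_pos {α β : ℝ} (hα : -1 < α) (hβ : -1 < β) {f : Polynomial ℝ} (hf : f ≠ 0) :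
    0 < jInt α β (f * f) := by
  have hI := jInt_integrable hα hβ (f * f)
  have hnn : ∀ x ∈ Ioc (-1:ℝ) 1, 0 ≤ (f * f).eval x * (1 - x) ^ α * (1 + x) ^ β := by
    intro x hx
    have h1 : 0 ≤ 1 - x := by linarith [hx.2]
    have h2 : 0 ≤ 1 + x := by linarith [hx.1]
    rw [eval_mul]
    have := mul_self_nonneg (f.eval x)
    positivity
  unfold jInt
  rw [intervalIntegral.integral_pos_iff_support_of_nonneg_ae' _ hI]
  · refine ⟨by norm_num, ?_⟩
    have hsub : Ioo (-1:ℝ) 1 \ (f.roots.toFinset : Set ℝ) ⊆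
        Function.support (fun x : ℝ => (f * f).eval x * (1 - x) ^ α * (1 + x) ^ β) ∩
          Ioc (-1) 1 := by
      rintro x ⟨hx, hr⟩
      have h1 : 0 < 1 - x := by linarith [hx.2]
      have h2 : 0 < 1 + x := by linarith [hx.1]
      refine ⟨?_, hx.1, hx.2.le⟩
      have h3 : f.eval x ≠ 0 := by
        intro h0; apply hr; simp [hf, h0]
      simp only [Function.mem_support, eval_mul]
      have := (Real.rpow_pos_of_pos h1 α).ne'
      have := (Real.rpow_pos_of_pos h2 β).ne'
      positivity
    refine lt_of_lt_of_le ?_ (measure_mono hsub)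
    rw [measure_sdiff_null (Set.Finite.measure_zero (Finset.finite_toSet _) _)]
    simp
  · rw [uIoc_of_le (by norm_num)]
    exact (ae_restrict_iff' measurableSet_Ioc).2 (Filter.Eventually.of_forall hnn)

lemma jacobiP_natDegree_le (α β : ℝ) (n : ℕ) : (jacobiP α β n).natDegree ≤ n := by
  unfold jacobiP
  refine natDegree_sum_le_of_forall_le _ _ fun k hk => ?_
  have hk' : k ≤ n := by simpa [Nat.lt_succ_iff] using hk
  have h1 : (C (2⁻¹ : ℝ) * (X - 1)).natDegree ≤ 1 := by
    refine (natDegree_C_mul_le _ _).trans ?_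
    rw [← C_1, natDegree_X_sub_C]
  have h2 : (C (2⁻¹ : ℝ) * (X + 1)).natDegree ≤ 1 := by
    refine (natDegree_C_mul_le _ _).trans ?_
    rw [← C_1, natDegree_X_add_C]
  have h3 := natDegree_pow_le_of_le k h1
  have h4 := natDegree_pow_le_of_le (n - k) h2
  refine natDegree_mul_le.trans ?_
  have := natDegree_C_mul_le (Real.Gamma (n + α + 1) / (Real.Gamma ((n : ℝ) - k + 1) * Real.Gamma (α + k + 1)) *
        (Real.Gamma (n + β + 1) / (Real.Gamma ((k : ℝ) + 1) * Real.Gamma ((n : ℝ) - k + β + 1))))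
        ((C (2⁻¹ : ℝ) * (X - 1)) ^ k)
  omega

lemma jacobiP_eval_one {α β : ℝ} (hα : -1 < α) (hβ : -1 < β) (n : ℕ) :
    (jacobiP α β n).eval 1 ≠ 0 := by
  have hn : (0:ℝ) ≤ n := Nat.cast_nonneg n
  have e : (jacobiP α β n).eval 1 =
      Real.Gamma (n + α + 1) / (Real.Gamma ((n : ℝ) + 1) * Real.Gamma (α + 1)) *
        (Real.Gamma (n + β + 1) / Real.Gamma ((n : ℝ) + β + 1)) := by
    unfold jacobiP
    rw [eval_finsetSum, Finset.sum_eq_single 0]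
    · norm_num
    · intro k _ hk
      simp [hk]
    · simp
  rw [e]
  have g1 := Real.Gamma_pos_of_pos (s := n + α + 1) (by linarith)
  have g2 := Real.Gamma_pos_of_pos (s := n + β + 1) (by linarith)
  have g3 := Real.Gamma_pos_of_pos (s := α + 1) (by linarith)
  have g4 := Real.Gamma_pos_of_pos (s := (n : ℝ) + 1) (by linarith)
  positivity

lemma jacobiP_ne_zero {α β : ℝ} (hα : -1 < α) (hβ : -1 < β) (n : ℕ) :
    jacobiP α β n ≠ 0 := by
  intro h
  apply jacobiP_eval_one hα hβ n
  rw [h]; simp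

lemma degree_lt_of_coeff {f : Polynomial ℝ} {n : ℕ} (h : f.natDegree ≤ n) (hc : f.coeff n = 0) :
    f.degree < n := by
  rw [degree_lt_iff_coeff_zero]
  intro m hm
  rcases hm.eq_or_lt with rfl | h'
  · exact hc
  · exact coeff_eq_zero_of_natDegree_lt (lt_of_le_of_lt h h')

lemma jacobiP_coeff {α β : ℝ} (hα : -1 < α) (hβ : -1 < β) (n : ℕ) :
    (jacobiP α β n).coeff n ≠ 0 := by
  intro h
  have h1 := jacobiP_orth hα hβ _ (degree_lt_of_coeff (jacobiP_natDegree_le α β n) h)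
  have h2 := jInt_sq_pos hα hβ (jacobiP_ne_zero hα hβ n)
  linarith

/-- Reducing the degree by subtracting a multiple of the Jacobi polynomial. -/
lemma jacobiP_reduce {α β : ℝ} (hα : -1 < α) (hβ : -1 < β) {n : ℕ} {f : Polynomial ℝ}
    (hf : f.natDegree ≤ n) :
    (f - C (f.coeff n / (jacobiP α β n).coeff n) * jacobiP α β n).degree < n := by
  refine degree_lt_of_coeff ?_ ?_
  · exact (natDegree_sub_le_of_le hf ((natDegree_C_mul_le _ _).trans (jacobiP_natDegree_le α β n))).trans
      (by simp)
  · rw [coeff_sub, coeff_C_mul, div_mul_cancel₀ _ (jacobiP_coeff hα hβ n), sub_self]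

lemma jacobiP_span {α β : ℝ} (hα : -1 < α) (hβ : -1 < β) (n : ℕ) :
    ∀ f : Polynomial ℝ, f.degree < n →
      ∃ c : ℕ → ℝ, f = ∑ i ∈ Finset.range n, C (c i) * jacobiP α β i := by
  induction n with
  | zero =>
    intro f hf
    refine ⟨0, ?_⟩
    simpa using hf
  | succ n ih =>
    intro f hf
    have hf' : f.natDegree ≤ n := by
      by_cases h0 : f = 0
      · simp [h0]
      · exact Nat.lt_succ_iff.1 ((natDegree_lt_iff_degree_lt h0).2 hf)
    obtain ⟨c, hc⟩ := ih _ (jacobiP_reduce hα hβ hf')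
    refine ⟨fun i => if i = n then f.coeff n / (jacobiP α β n).coeff n else c i, ?_⟩
    rw [Finset.sum_range_succ]
    have : ∑ x ∈ Finset.range n,
        C (if x = n then f.coeff n / (jacobiP α β n).coeff n else c x) * jacobiP α β x =
        ∑ i ∈ Finset.range n, C (c i) * jacobiP α β i := by
      refine Finset.sum_congr rfl fun i hi => ?_
      rw [if_neg (Finset.mem_range.1 hi).ne]
    rw [this, ← hc]
    simp

lemma jacobiP_orth_ne {α β : ℝ} (hα : -1 < α) (hβ : -1 < β) {i k : ℕ} (h : i ≠ k) :
    jInt α β (jacobiP α β i * jacobiP α β k) = 0 := by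
  have aux : ∀ {a b : ℕ}, a < b → (jacobiP α β a).degree < b := fun {a b} hab =>
    lt_of_le_of_lt degree_le_natDegree
      (by exact_mod_cast lt_of_le_of_lt (jacobiP_natDegree_le α β a) hab)
  rcases lt_or_gt_of_ne h with h | h
  · rw [mul_comm]
    exact jacobiP_orth hα hβ _ (aux h)
  · exact jacobiP_orth hα hβ _ (aux h)

lemma jacobiNormSq_eq (α β : ℝ) (n : ℕ) :
    jacobiNormSq α β n = jInt α β (jacobiP α β n * jacobiP α β n) := by
  unfold jacobiNormSq jInt
  simp only [eval_mul, pow_two]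

lemma kern_repr_basis {α β : ℝ} (hα : -1 < α) (hβ : -1 < β) (j n i : ℕ) (hi : i ≤ n) :
    jInt α β (kernKPoly α β j n * jacobiP α β i) =
      (derivative^[j] (jacobiP α β i)).eval 1 := by
  unfold kernKPoly
  rw [Finset.sum_mul, jInt_sum hα hβ, Finset.sum_eq_single i]
  · rw [mul_assoc, jInt_C_mul, ← jacobiNormSq_eq, div_mul_cancel₀]
    rw [jacobiNormSq_eq]
    exact (jInt_sq_pos hα hβ (jacobiP_ne_zero hα hβ i)).ne'
  · intro k _ hk
    rw [mul_assoc, jInt_C_mul, jacobiP_orth_ne hα hβ hk, mul_zero]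
  · intro h
    exact absurd (Finset.mem_range.2 (by omega)) h

lemma kern_repr {α β : ℝ} (hα : -1 < α) (hβ : -1 < β) (j n : ℕ) (f : Polynomial ℝ)
    (hf : f.degree < (n + 1 : ℕ)) :
    jInt α β (kernKPoly α β j n * f) = (derivative^[j] f).eval 1 := by
  obtain ⟨c, hc⟩ := jacobiP_span hα hβ (n + 1) f hf
  rw [hc, Finset.mul_sum, jInt_sum hα hβ, iterate_derivative_sum, eval_finsetSum]
  refine Finset.sum_congr rfl fun i hi => ?_
  rw [mul_left_comm, jInt_C_mul, kern_repr_basis hα hβ j n i (by simpa [Nat.lt_succ_iff] using hi),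
    iterate_derivative_C_mul, eval_C_mul]

lemma iterate_derivative_vanish (j : ℕ) (p : Polynomial ℝ) :
    (derivative^[j] ((1 - X) ^ (j + 1) * p)).eval 1 = 0 := by
  have h : (X - C (1:ℝ)) ^ (j + 1 - j) ∣ derivative^[j] ((1 - X) ^ (j + 1) * p) := by
    apply pow_sub_dvd_iterate_derivative_of_pow_dvd
    refine Dvd.intro (C ((-1) ^ (j + 1)) * p) ?_
    rw [show (1 - X : Polynomial ℝ) = C (-1) * (X - C 1) by simp, mul_pow, C_pow]
    ring
  rw [Nat.add_sub_cancel_left, pow_one, dvd_iff_isRoot] at h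
  exact h

lemma one_sub_X_natDegree (m : ℕ) : ((1 - X : Polynomial ℝ) ^ m).natDegree = m := by
  rw [natDegree_pow, ← C_1, show (C (1:ℝ) - X) = -(X - C 1) by ring, natDegree_neg,
    natDegree_X_sub_C, mul_one]

lemma one_sub_X_ne (m : ℕ) : ((1 - X : Polynomial ℝ) ^ m) ≠ 0 := by
  apply pow_ne_zero
  intro h
  have := congrArg (eval 0) h
  simp at this

lemma one_sub_X_mul_degree {m k : ℕ} {p : Polynomial ℝ} (hp : p.degree < k) :
    ((1 - X) ^ m * p).degree < ((m + k : ℕ) : WithBot ℕ) := by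
  by_cases h0 : p = 0
  · rw [h0, mul_zero, degree_zero]; exact WithBot.bot_lt_coe _
  rw [← natDegree_lt_iff_degree_lt h0] at hp
  rw [← natDegree_lt_iff_degree_lt (mul_ne_zero (one_sub_X_ne m) h0),
    natDegree_mul (one_sub_X_ne m) h0, one_sub_X_natDegree]
  omega

lemma sobQ_orth {α β : ℝ} (hα : -1 < α) (hβ : -1 < β) (j : ℕ) (Ms : ℕ → ℝ) (r : ℕ)
    (p : Polynomial ℝ) (hp : p.degree < r) :
    jInt α β (sobQ α β j Ms (j + 1 + r) * ((1 - X) ^ (j + 1) * p)) = 0 := by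
  have hd := one_sub_X_mul_degree (m := j + 1) hp
  unfold sobQ
  rw [sub_mul, jInt_sub hα hβ, jacobiP_orth hα hβ _ hd, mul_assoc, jInt_C_mul,
    kern_repr hα hβ _ _ _ (by rwa [show j + 1 + r - 1 + 1 = j + 1 + r by omega]),
    iterate_derivative_vanish]
  simp

lemma kernKPoly_natDegree_le (α β : ℝ) (j n : ℕ) : (kernKPoly α β j n).natDegree ≤ n := by
  unfold kernKPoly
  refine natDegree_sum_le_of_forall_le _ _ fun k hk => ?_
  have hk' : k ≤ n := by simpa [Nat.lt_succ_iff] using hk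
  exact (natDegree_C_mul_le _ _).trans ((jacobiP_natDegree_le α β k).trans hk')

lemma sobQ_natDegree_le (α β : ℝ) (j : ℕ) (Ms : ℕ → ℝ) (n : ℕ) :
    (sobQ α β j Ms n).natDegree ≤ n := by
  unfold sobQ
  refine (natDegree_sub_le_of_le (jacobiP_natDegree_le α β n)
    ((natDegree_C_mul_le _ _).trans (kernKPoly_natDegree_le α β j (n - 1)))).trans ?_
  simp

lemma sobQ_ne_zero {α β : ℝ} (hα : -1 < α) (hβ : -1 < β) (j : ℕ) (Ms : ℕ → ℝ) (n : ℕ)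
    (hn : 1 ≤ n) : sobQ α β j Ms n ≠ 0 := by
  intro h
  have h1 := congrArg (fun q => coeff q n) h
  simp only [sobQ, coeff_sub, coeff_C_mul, coeff_zero] at h1
  rw [coeff_eq_zero_of_natDegree_lt (p := kernKPoly α β j (n - 1))
    (lt_of_le_of_lt (kernKPoly_natDegree_le α β j (n - 1)) (by omega)), mul_zero, sub_zero] at h1
  exact jacobiP_coeff hα hβ n h1

/-- Peeling off the first `m` terms. -/
lemma peel {α β : ℝ} (hα : -1 < α) (hβ : -1 < β) (n : ℕ) (Q : Polynomial ℝ) (m : ℕ) :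
    ∃ (b : ℕ → ℝ) (S : Polynomial ℝ), Q = ∑ i ∈ Finset.range m,
      C (b i) * (1 - X) ^ i * jacobiP (α + 2 * i) β (n - i) + (1 - X) ^ m * S := by
  induction m with
  | zero => exact ⟨0, Q, by simp⟩
  | succ m ih =>
    obtain ⟨b, S, h⟩ := ih
    have hm : (0:ℝ) ≤ m := Nat.cast_nonneg m
    have h1 := jacobiP_eval_one (α := α + 2 * m) (β := β) (by linarith) hβ (n - m)
    set P := jacobiP (α + 2 * m) β (n - m) with hP
    set c := S.eval 1 / P.eval 1 with hc
    have h2 : (X - C (1:ℝ)) ∣ S - C c * P := by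
      rw [dvd_iff_isRoot, IsRoot, eval_sub, eval_C_mul, hc, div_mul_cancel₀ _ h1, sub_self]
    obtain ⟨T, hT⟩ := h2
    refine ⟨fun i => if i = m then c else b i, -T, ?_⟩
    rw [Finset.sum_range_succ]
    have h3 : ∑ i ∈ Finset.range m, C (if i = m then c else b i) * (1 - X) ^ i *
        jacobiP (α + 2 * i) β (n - i) = ∑ i ∈ Finset.range m,
        C (b i) * (1 - X) ^ i * jacobiP (α + 2 * i) β (n - i) := by
      refine Finset.sum_congr rfl fun i hi => ?_
      rw [if_neg (Finset.mem_range.1 hi).ne]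
    beta_reduce
    rw [h3, if_pos rfl, ← hP]
    have hS : S = C c * P + (X - 1) * T := by
      rw [← C_1, ← hT]; ring
    conv_lhs => rw [h, hS]
    ring

lemma term_orth {α β : ℝ} (hα : -1 < α) (hβ : -1 < β) (j r i : ℕ) (hi : i ≤ j)
    (p : Polynomial ℝ) (hp : p.degree < r) :
    jInt α β ((1 - X) ^ i * jacobiP (α + 2 * i) β (j + 1 + r - i) * ((1 - X) ^ (j + 1) * p)) = 0 := by
  have hi0 : (0:ℝ) ≤ i := Nat.cast_nonneg i
  have e : (1 - X) ^ i * jacobiP (α + 2 * i) β (j + 1 + r - i) * ((1 - X) ^ (j + 1) * p) =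
      (1 - X) ^ (2 * i) * (1 + X) ^ 0 * (jacobiP (α + 2 * i) β (j + 1 + r - i) *
        ((1 - X) ^ (j + 1 - i) * p)) := by
    have : (1 - X : Polynomial ℝ) ^ (j + 1) = (1 - X) ^ i * (1 - X) ^ (j + 1 - i) := by
      rw [← pow_add]; congr 1; omega
    rw [this]; ring
  rw [e, jInt_shift]
  push_cast
  rw [add_zero]
  refine jacobiP_orth (by linarith) hβ _ ?_
  have := one_sub_X_mul_degree (m := j + 1 - i) hp
  rwa [show j + 1 - i + r = j + 1 + r - i by omega] at this

end JacobiAux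

/-- connection formula
`Q_n(x) = ∑_{i=0}^{j+1} b_i(n) (1-x)^i P_{n-i}^{(α+2i,β)}(x)`. -/
theorem sobQ_connection_formula (α β : ℝ) (hα : -1 < α) (hβ : -1 < β) (j : ℕ)
    (Ms : ℕ → ℝ) (hMs : ∀ n, 0 ≤ Ms n) (n : ℕ) (hn : j + 1 ≤ n) :
    ∃ b : ℕ → ℝ, (∃ i, i ≤ j + 1 ∧ b i ≠ 0) ∧
      sobQ α β j Ms n =
        ∑ i ∈ Finset.range (j + 2),
          Polynomial.C (b i) * (1 - Polynomial.X) ^ i * jacobiP (α + 2 * i) β (n - i) := by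
  obtain ⟨r, rfl⟩ := Nat.exists_eq_add_of_le hn
  obtain ⟨b, S, hS⟩ := peel hα hβ (j + 1 + r) (sobQ α β j Ms (j + 1 + r)) (j + 1)
  have hj0 : (0:ℝ) ≤ ((j + 1 : ℕ) : ℝ) := Nat.cast_nonneg _
  have hα' : -1 < α + 2 * ((j + 1 : ℕ) : ℝ) := by linarith
  set A := ∑ i ∈ Finset.range (j + 1),
      C (b i) * (1 - X) ^ i * jacobiP (α + 2 * i) β (j + 1 + r - i) with hA
  -- degree of the remainder
  have hAd : A.natDegree ≤ j + 1 + r := by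
    refine natDegree_sum_le_of_forall_le _ _ fun i hi => ?_
    have hi' : i < j + 1 := Finset.mem_range.1 hi
    have h1 := jacobiP_natDegree_le (α + 2 * i) β (j + 1 + r - i)
    have h2 := natDegree_C_mul_le (b i) ((1 - X) ^ i)
    rw [one_sub_X_natDegree] at h2
    refine natDegree_mul_le.trans ?_
    omega
  have hSd : S.natDegree ≤ r := by
    by_cases h0 : S = 0
    · simp [h0]
    have h1 : ((1 - X) ^ (j + 1) * S).natDegree ≤ j + 1 + r := by
      have h2 : (1 - X) ^ (j + 1) * S = sobQ α β j Ms (j + 1 + r) - A := by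
        rw [hS]; ring
      rw [h2]
      exact (natDegree_sub_le_of_le (sobQ_natDegree_le α β j Ms _) hAd).trans (by simp)
    rw [natDegree_mul (one_sub_X_ne _) h0, one_sub_X_natDegree] at h1
    omega
  -- orthogonality of the remainder
  have hSo : ∀ p : Polynomial ℝ, p.degree < r → jInt (α + 2 * ((j + 1 : ℕ) : ℝ)) β (S * p) = 0 := by
    intro p hp
    have h1 := sobQ_orth hα hβ j Ms r p hp
    rw [hS, add_mul, jInt_add hα hβ, hA, Finset.sum_mul, jInt_sum hα hβ,
      Finset.sum_eq_zero, zero_add] at h1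
    · have e : (1 - X) ^ (j + 1) * S * ((1 - X) ^ (j + 1) * p) =
          (1 - X) ^ (2 * (j + 1)) * (1 + X) ^ 0 * (S * p) := by
        rw [two_mul, pow_add]; ring
      rw [e, jInt_shift] at h1
      push_cast at h1 ⊢
      rwa [add_zero] at h1
    · intro i hi
      rw [mul_assoc, mul_assoc, jInt_C_mul, ← mul_assoc,
        term_orth hα hβ j r i (by have := Finset.mem_range.1 hi; omega) p hp, mul_zero]
  set P := jacobiP (α + 2 * ((j + 1 : ℕ) : ℝ)) β r with hP
  set c := S.coeff r / P.coeff r with hc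
  have hS2 : S = C c * P := by
    by_contra hne
    have hT : S - C c * P ≠ 0 := sub_ne_zero.2 hne
    have hd := jacobiP_reduce hα' hβ hSd
    rw [← hP, ← hc] at hd
    have h1 := jInt_sq_pos hα' hβ hT
    rw [sub_mul, jInt_sub hα' hβ, hSo _ hd, mul_assoc, jInt_C_mul,
      jacobiP_orth hα' hβ _ hd] at h1
    simp at h1
  have hmain : sobQ α β j Ms (j + 1 + r) = ∑ i ∈ Finset.range (j + 2),
      C (if i = j + 1 then c else b i) * (1 - X) ^ i *
        jacobiP (α + 2 * i) β (j + 1 + r - i) := by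
    rw [Finset.sum_range_succ, if_pos rfl, Nat.add_sub_cancel_left, ← hP]
    have h3 : ∑ i ∈ Finset.range (j + 1), C (if i = j + 1 then c else b i) * (1 - X) ^ i *
        jacobiP (α + 2 * i) β (j + 1 + r - i) = A := by
      refine Finset.sum_congr rfl fun i hi => ?_
      rw [if_neg (Finset.mem_range.1 hi).ne]
    rw [h3, hS, hS2]
    ring
  refine ⟨fun i => if i = j + 1 then c else b i, ?_, hmain⟩
  by_contra hall
  push Not at hall
  apply sobQ_ne_zero hα hβ j Ms (j + 1 + r) (by omega)
  rw [hmain]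
  refine Finset.sum_eq_zero fun i hi => ?_
  have hi' := Finset.mem_range.1 hi
  have := hall i (by omega)
  rw [this]
  simp
end

section
/- Fix real α, β > −1, j ∈ ℕ, γ ∈ ℝ, M > 0, and a sequence M_n ≥ 0 with lim_{n→∞} M_n n^γ = M. For each n ≥ j+1, the real numbers b_0(n), …, b_{j+1}(n) satisfying Q_n(x) = Σ_{i=0}^{j+1} b_i(n)·(1−x)^i·P_{n−i}^{(α+2i,β)}(x) are unique, and for each i ∈ {0,1,…,j+1} the sequence (b_i(n))_n converges to a real limit as n → ∞. -/
open Polynomial Filter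

lemma aux_gamma_desc (r : ℝ) (l : ℕ) (h : (l : ℝ) - r < 1) :
    Real.Gamma (r + 1) = (descPochhammer ℝ l).eval r * Real.Gamma (r - l + 1) := by
  induction l with
  | zero => simp
  | succ l ih =>
    push_cast at h
    rw [ih (by linarith), descPochhammer_succ_eval, Real.Gamma_add_one (s := r - l) (by linarith)]
    push_cast
    rw [show r - (l + 1 : ℝ) + 1 = r - l by ring]
    ring

lemma aux_vander (r s : ℝ) (k : ℕ) :
    (descPochhammer ℝ k).eval (r + s) =
      ∑ l ∈ Finset.range (k + 1), (k.choose l : ℝ) *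
        ((descPochhammer ℝ l).eval r * (descPochhammer ℝ (k - l)).eval s) := by
  have key : ∀ (m : ℕ) (x : ℝ), (descPochhammer ℤ m).smeval x = (descPochhammer ℝ m).eval x := by
    intro m x
    rw [← descPochhammer_map (Int.castRingHom ℝ), Polynomial.eval_map, Polynomial.smeval_def,
      Polynomial.eval₂_eq_sum]
    simp [Polynomial.sum_def, Polynomial.smul_pow]
  have := Ring.descPochhammer_smeval_add k (Commute.all r s)
  simp only [key] at this
  rw [this, Finset.Nat.sum_antidiagonal_eq_sum_range_succ
    (fun i j => (k.choose i : ℝ) * ((descPochhammer ℝ i).eval r * (descPochhammer ℝ j).eval s))]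

/-- Taylor coefficient at `1`. -/
noncomputable def auxT (k : ℕ) (p : Polynomial ℝ) : ℝ := (Polynomial.taylor 1 p).coeff k

lemma auxT_add (k : ℕ) (p q : Polynomial ℝ) : auxT k (p + q) = auxT k p + auxT k q := by
  simp [auxT]

lemma auxT_sub (k : ℕ) (p q : Polynomial ℝ) : auxT k (p - q) = auxT k p - auxT k q := by
  simp [auxT]

lemma auxT_C_mul (k : ℕ) (c : ℝ) (q : Polynomial ℝ) :
    auxT k (Polynomial.C c * q) = c * auxT k q := by
  simp [auxT]

lemma auxT_sum (k : ℕ) (s : Finset ℕ) (f : ℕ → Polynomial ℝ) :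
    auxT k (∑ i ∈ s, f i) = ∑ i ∈ s, auxT k (f i) := by
  simp [auxT]

lemma auxT_deriv (k : ℕ) (p : Polynomial ℝ) :
    (Polynomial.derivative^[k] p).eval 1 = k.factorial * auxT k p := by
  rw [auxT, Polynomial.taylor_coeff, ← Polynomial.factorial_smul_hasseDeriv]
  simp

lemma auxT_one_sub_pow (k i : ℕ) (p : Polynomial ℝ) :
    auxT k ((1 - Polynomial.X) ^ i * p) =
      if i ≤ k then (-1) ^ i * auxT (k - i) p else 0 := by
  have : Polynomial.taylor 1 ((1 - Polynomial.X) ^ i * p) =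
      Polynomial.C ((-1) ^ i) * (Polynomial.X ^ i * Polynomial.taylor 1 p) := by
    rw [Polynomial.taylor_mul, Polynomial.taylor_pow]
    simp only [map_sub, Polynomial.taylor_X, Polynomial.taylor_one]
    rw [← mul_assoc, map_pow, ← mul_pow]
    congr 2
    simp
  rw [auxT, this, Polynomial.coeff_C_mul, Polynomial.coeff_X_pow_mul']
  split_ifs <;> simp [auxT]

lemma auxT_basis (k l m : ℕ) :
    auxT k ((Polynomial.C (2⁻¹ : ℝ) * (Polynomial.X - 1)) ^ l *
      (Polynomial.C (2⁻¹ : ℝ) * (Polynomial.X + 1)) ^ m) =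
      if l ≤ k then (2⁻¹ : ℝ) ^ k * (m.choose (k - l) : ℝ) else 0 := by
  have : Polynomial.taylor 1 ((Polynomial.C (2⁻¹ : ℝ) * (Polynomial.X - 1)) ^ l *
      (Polynomial.C (2⁻¹ : ℝ) * (Polynomial.X + 1)) ^ m) =
      (Polynomial.X ^ l * (Polynomial.X + 1) ^ m).comp (Polynomial.C (2⁻¹ : ℝ) * Polynomial.X) := by
    rw [Polynomial.taylor_mul, Polynomial.taylor_pow, Polynomial.taylor_pow]
    simp only [Polynomial.taylor_mul, map_sub, map_add, Polynomial.taylor_X, Polynomial.taylor_one,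
      Polynomial.taylor_C, Polynomial.mul_comp, Polynomial.pow_comp, Polynomial.add_comp,
      Polynomial.X_comp, Polynomial.one_comp]
    have h2 : (Polynomial.C (2⁻¹ : ℝ)) * 2 = 1 := by
      rw [show (2 : Polynomial ℝ) = Polynomial.C 2 from rfl, ← Polynomial.C_mul]; norm_num
    simp only [Polynomial.C_1]
    congr 2
    · ring
    · linear_combination h2
  rw [auxT, this, Polynomial.comp_C_mul_X_coeff, Polynomial.coeff_X_pow_mul']
  split_ifs
  · rw [Polynomial.coeff_X_add_one_pow]; ring
  · simp

lemma auxT_jacobi (α β : ℝ) (hα : -1 < α) (hβ : -1 < β) (n k : ℕ) (hk : k ≤ n) :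
    auxT k (jacobiP α β n) = (2⁻¹ : ℝ) ^ k *
      (Real.Gamma (n + α + 1) / (((n - k).factorial : ℝ) * Real.Gamma (α + k + 1))) *
      ((descPochhammer ℝ k).eval (n + k + α + β) / k.factorial) := by
  have hv := aux_vander (n + β) (α + k) k
  rw [show (n : ℝ) + k + α + β = n + β + (α + k) by ring, hv, jacobiP, auxT_sum]
  rw [← Finset.sum_subset (Finset.range_mono (show k + 1 ≤ n + 1 by omega))]
  · rw [Finset.sum_div, Finset.mul_sum]
    refine Finset.sum_congr rfl fun l hl => ?_
    have hl : l ≤ k := by simpa [Nat.lt_succ_iff] using hl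
    rw [mul_assoc, auxT_C_mul, auxT_basis, if_pos hl]
    have e1 := aux_gamma_desc (n + β) l (by
      have : (l : ℝ) ≤ n := by exact_mod_cast hl.trans hk
      linarith)
    have e2 := aux_gamma_desc (α + k) (k - l) (by
      rw [Nat.cast_sub hl]
      have : (0 : ℝ) ≤ l := by positivity
      linarith)
    rw [Nat.cast_sub hl, show α + k - (k - l : ℝ) + 1 = α + l + 1 by ring] at e2
    have g1 : Real.Gamma ((n : ℝ) - l + 1) = ((n - l).factorial : ℝ) := by
      rw [← Nat.cast_sub (hl.trans hk), Real.Gamma_nat_eq_factorial]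
    rw [e1, g1, Real.Gamma_nat_eq_factorial, Nat.cast_choose ℝ hl,
      Nat.cast_choose ℝ (show k - l ≤ n - l by omega), show n - l - (k - l) = n - k by omega,
      e2, show (n : ℝ) + β - l + 1 = n - l + β + 1 by ring]
    have p1 : Real.Gamma ((n : ℝ) - l + β + 1) ≠ 0 := by
      apply (Real.Gamma_pos_of_pos _).ne'
      have : (l : ℝ) ≤ n := by exact_mod_cast hl.trans hk
      linarith
    have p2 : Real.Gamma (α + l + 1) ≠ 0 := by
      apply (Real.Gamma_pos_of_pos _).ne'
      have : (0 : ℝ) ≤ l := by positivity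
      linarith
    have p3 : Real.Gamma (α + k + 1) ≠ 0 := by
      apply (Real.Gamma_pos_of_pos _).ne'
      have : (0 : ℝ) ≤ k := by positivity
      linarith
    have p4 : (descPochhammer ℝ (k - l)).eval (α + k) ≠ 0 := by
      intro h; rw [h, zero_mul] at e2; exact p3 e2
    have q1 := fun m : ℕ => (Nat.cast_ne_zero (R := ℝ)).2 (Nat.factorial_ne_zero m)
    have q2 := q1 (n - l)
    have q3 := q1 (k - l)
    have q4 := q1 (n - k)
    have q5 := q1 k
    have q6 := q1 l
    field_simp
  · intro l _ hl
    have hl : ¬ l ≤ k := by simpa [Nat.lt_succ_iff] using hl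
    rw [mul_assoc, auxT_C_mul, auxT_basis, if_neg hl, mul_zero]

lemma auxT_jacobi' (α β : ℝ) (hα : -1 < α) (hβ : -1 < β) (n k : ℕ) (hk : k ≤ n) (hn : 1 ≤ n) :
    auxT k (jacobiP α β n) = (2⁻¹ : ℝ) ^ k *
      (Real.Gamma (n + α + 1) / (((n - k).factorial : ℝ) * Real.Gamma (α + k + 1))) *
      (Real.Gamma (n + k + α + β + 1) / (Real.Gamma (n + α + β + 1) * k.factorial)) := by
  have hn' : (1 : ℝ) ≤ n := by exact_mod_cast hn
  rw [auxT_jacobi α β hα hβ n k hk, aux_gamma_desc (n + k + α + β) k (by linarith),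
    show (n : ℝ) + k + α + β - k + 1 = n + α + β + 1 by ring]
  have p1 : Real.Gamma (n + α + β + 1) ≠ 0 := by
    apply (Real.Gamma_pos_of_pos _).ne'
    linarith
  congr 1
  field_simp

lemma auxT_zero_pos (α β : ℝ) (hα : -1 < α) (hβ : -1 < β) (n : ℕ) :
    0 < auxT 0 (jacobiP α β n) := by
  rw [auxT_jacobi α β hα hβ n 0 (by omega)]
  have h1 : 0 < Real.Gamma (n + α + 1) := by
    apply Real.Gamma_pos_of_pos
    have : (0 : ℝ) ≤ n := by positivity
    linarith
  have h2 : 0 < Real.Gamma (α + 1) := Real.Gamma_pos_of_pos (by linarith)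
  simp
  positivity

lemma aux_beta01 (u v : ℝ) (hu : 0 < u) (hv : 0 < v) :
    IntervalIntegrable (fun t : ℝ => t ^ (u - 1) * (1 - t) ^ (v - 1)) MeasureTheory.volume 0 1 ∧
    ∫ t in (0 : ℝ)..1, t ^ (u - 1) * (1 - t) ^ (v - 1) =
      Real.Gamma u * Real.Gamma v / Real.Gamma (u + v) := by
  have hc : ∀ x ∈ Set.uIoc (0 : ℝ) 1, (x : ℂ) ^ ((u : ℂ) - 1) * (1 - (x : ℂ)) ^ ((v : ℂ) - 1) =
      ((x ^ (u - 1) * (1 - x) ^ (v - 1) : ℝ) : ℂ) := by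
    intro x hx
    rw [Set.uIoc_of_le zero_le_one] at hx
    push_cast
    rw [Complex.ofReal_cpow hx.1.le, Complex.ofReal_cpow (by linarith [hx.2])]
    push_cast
    rfl
  have hI := Complex.betaIntegral_convergent (u := u) (v := v) (by simpa) (by simpa)
  have hI2 := hI.congr (fun x hx => hc x hx)
  constructor
  · rw [intervalIntegrable_iff] at hI2 ⊢
    have h3 := MeasureTheory.Integrable.re hI2
    simp only [RCLike.re_to_complex, Complex.ofReal_re] at h3
    exact h3
  · have h1 : Complex.betaIntegral u v =
      ((∫ t in (0 : ℝ)..1, t ^ (u - 1) * (1 - t) ^ (v - 1) : ℝ) : ℂ) := by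
      rw [← intervalIntegral.integral_ofReal, Complex.betaIntegral]
      apply intervalIntegral.integral_congr_ae
      filter_upwards with x hx using hc x hx
    have h2 := ProbabilityTheory.beta_eq_betaIntegralReal u v hu hv
    rw [h1, Complex.ofReal_re, ProbabilityTheory.beta] at h2
    exact h2.symm

lemma aux_beta (a b : ℝ) (ha : -1 < a) (hb : -1 < b) :
    IntervalIntegrable (fun x : ℝ => (1 - x) ^ a * (1 + x) ^ b) MeasureTheory.volume (-1) 1 ∧
    ∫ x in (-1 : ℝ)..1, (1 - x) ^ a * (1 + x) ^ b =
      2 ^ (a + b + 1) * (Real.Gamma (a + 1) * Real.Gamma (b + 1) / Real.Gamma (a + b + 2)) := by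
  obtain ⟨h1, h2⟩ := aux_beta01 (b + 1) (a + 1) (by linarith) (by linarith)
  simp only [add_sub_cancel_right] at h1 h2
  have hc : ∀ x ∈ Set.Icc (-1 : ℝ) 1, (2 : ℝ) ^ (a + b) *
      (((2⁻¹ : ℝ) * (x + 1)) ^ b * (1 - (2⁻¹ : ℝ) * (x + 1)) ^ a) = (1 - x) ^ a * (1 + x) ^ b := by
    intro x hx
    rw [show 1 - (2⁻¹ : ℝ) * (x + 1) = 2⁻¹ * (1 - x) by ring,
      Real.mul_rpow (by norm_num) (by linarith [hx.1]),
      Real.mul_rpow (by norm_num) (by linarith [hx.2]), Real.rpow_add (by norm_num),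
      Real.inv_rpow (by norm_num), Real.inv_rpow (by norm_num), add_comm x 1]
    have : (2 : ℝ) ^ a ≠ 0 := (Real.rpow_pos_of_pos (by norm_num) _).ne'
    have : (2 : ℝ) ^ b ≠ 0 := (Real.rpow_pos_of_pos (by norm_num) _).ne'
    field_simp
  constructor
  · have h3 := ((h1.comp_mul_left (c := 2⁻¹)).comp_add_right 1).const_mul ((2 : ℝ) ^ (a + b))
    norm_num at h3
    refine h3.congr fun x hx => ?_
    rw [Set.uIoc_of_le (by norm_num)] at hx
    have := hc x ⟨hx.1.le, hx.2⟩
    norm_num at this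
    exact this
  · have h3 := intervalIntegral.integral_comp_mul_add (a := -1) (b := 1) (c := 2⁻¹)
      (fun t : ℝ => t ^ b * (1 - t) ^ a) (by norm_num) 2⁻¹
    norm_num at h3
    rw [h2] at h3
    rw [← intervalIntegral.integral_congr (f := fun x => (2 : ℝ) ^ (a + b) *
      (((2⁻¹ : ℝ) * (x + 1)) ^ b * (1 - (2⁻¹ : ℝ) * (x + 1)) ^ a)),
      intervalIntegral.integral_const_mul]
    · rw [show (fun x : ℝ => (((2⁻¹ : ℝ) * (x + 1)) ^ b * (1 - (2⁻¹ : ℝ) * (x + 1)) ^ a)) =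
        fun x : ℝ => (1 / 2 * x + 1 / 2) ^ b * (1 - (1 / 2 * x + 1 / 2)) ^ a by
          ext x; congr 2 <;> ring]
      rw [h3, Real.rpow_add_one (by norm_num), show b + 1 + (a + 1) = a + b + 2 by ring]
      ring
    · intro x hx
      rw [Set.uIcc_of_le (by norm_num)] at hx
      exact hc x hx

/-- Weighted integral of a polynomial. -/
noncomputable def auxJ (α β : ℝ) (p : Polynomial ℝ) : ℝ :=
  ∫ x in (-1 : ℝ)..1, p.eval x * ((1 - x) ^ α * (1 + x) ^ β)

lemma auxJ_int (α β : ℝ) (hα : -1 < α) (hβ : -1 < β) (p : Polynomial ℝ) :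
    IntervalIntegrable (fun x : ℝ => p.eval x * ((1 - x) ^ α * (1 + x) ^ β))
      MeasureTheory.volume (-1) 1 :=
  (aux_beta α β hα hβ).1.continuousOn_mul p.continuous.continuousOn

lemma auxJ_sum (α β : ℝ) (hα : -1 < α) (hβ : -1 < β) (s : Finset ℕ) (f : ℕ → Polynomial ℝ) :
    auxJ α β (∑ i ∈ s, f i) = ∑ i ∈ s, auxJ α β (f i) := by
  simp only [auxJ]
  rw [← intervalIntegral.integral_finsetSum (fun i _ => auxJ_int α β hα hβ (f i))]
  simp only [Polynomial.eval_finsetSum, Finset.sum_mul]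

lemma auxJ_C_mul (α β : ℝ) (c : ℝ) (p : Polynomial ℝ) :
    auxJ α β (Polynomial.C c * p) = c * auxJ α β p := by
  simp only [auxJ]
  rw [← intervalIntegral.integral_const_mul]
  simp [mul_assoc]

lemma auxJ_basis (α β : ℝ) (hα : -1 < α) (hβ : -1 < β) (m k l : ℕ) :
    auxJ α β ((1 - Polynomial.X) ^ m * ((Polynomial.C (2⁻¹ : ℝ) * (Polynomial.X - 1)) ^ k *
      (Polynomial.C (2⁻¹ : ℝ) * (Polynomial.X + 1)) ^ l)) =
    (-1) ^ k * 2⁻¹ ^ (k + l) * (2 ^ (α + β + m + k + l + 1) *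
      (Real.Gamma (α + m + k + 1) * Real.Gamma (β + l + 1) /
        Real.Gamma (α + β + m + k + l + 2))) := by
  have h := (aux_beta (α + m + k) (β + l) (by
    have : (0 : ℝ) ≤ m := by positivity
    have : (0 : ℝ) ≤ k := by positivity
    linarith) (by
    have : (0 : ℝ) ≤ l := by positivity
    linarith)).2
  rw [show α + m + k + (β + l) + 1 = α + β + m + k + l + 1 by ring,
    show α + m + k + (β + l) + 2 = α + β + m + k + l + 2 by ring] at h
  rw [← h, ← intervalIntegral.integral_const_mul, auxJ,
    intervalIntegral.integral_of_le (by norm_num), intervalIntegral.integral_of_le (by norm_num),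
    MeasureTheory.integral_Ioc_eq_integral_Ioo, MeasureTheory.integral_Ioc_eq_integral_Ioo]
  refine MeasureTheory.setIntegral_congr_fun measurableSet_Ioo fun x hx => ?_
  have h1 : 0 < 1 - x := by linarith [hx.2]
  have h2 : 0 < 1 + x := by linarith [hx.1]
  simp only [Polynomial.eval_mul, Polynomial.eval_pow, Polynomial.eval_sub, Polynomial.eval_add,
    Polynomial.eval_one, Polynomial.eval_X, Polynomial.eval_C]
  rw [Real.rpow_add h1, Real.rpow_add h1, Real.rpow_add h2]
  simp only [Real.rpow_natCast]
  rw [show (2⁻¹ : ℝ) * (x - 1) = (-1) * 2⁻¹ * (1 - x) by ring, mul_pow, mul_pow, mul_pow, pow_add,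
    add_comm x 1]
  ring

lemma aux_fd (α : ℝ) (n m : ℕ) (hm : m ≤ n) :
    ∑ k ∈ Finset.range (n + 1), (-1 : ℝ) ^ k * (n.choose k : ℝ) *
      (descPochhammer ℝ m).eval (α + m + k) = if m = n then (-1) ^ n * (n.factorial : ℝ) else 0 := by
  set p : Polynomial ℝ := (descPochhammer ℝ m).comp (Polynomial.X + Polynomial.C (α + m)) with hp
  have hdeg : p.natDegree = m := by
    rw [hp, Polynomial.natDegree_comp, descPochhammer_natDegree, Polynomial.natDegree_X_add_C,
      mul_one]
  have hmon : p.leadingCoeff = 1 :=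
    ((monic_descPochhammer ℝ m).comp_X_add_C (α + m))
  have h := fwdDiff_iter_eq_sum_shift (1 : ℝ) (fun x => p.eval x) n 0
  have h2 : ∑ k ∈ Finset.range (n + 1), (-1 : ℝ) ^ k * (n.choose k : ℝ) *
      (descPochhammer ℝ m).eval (α + m + k) = (-1) ^ n * (fwdDiff (1 : ℝ))^[n] (fun x => p.eval x) 0 := by
    rw [h, Finset.mul_sum]
    refine Finset.sum_congr rfl fun k hk => ?_
    have hk : k ≤ n := by simpa [Nat.lt_succ_iff] using hk
    rw [zsmul_eq_mul]
    push_cast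
    have e : (-1 : ℝ) ^ n * (-1) ^ (n - k) = (-1) ^ k := by
      obtain ⟨d, rfl⟩ := Nat.exists_eq_add_of_le hk
      rw [Nat.add_sub_cancel_left, pow_add, mul_assoc, ← pow_add, ← two_mul, pow_mul]
      simp
    rw [hp, ← mul_assoc, ← mul_assoc, e]
    simp [add_comm]
  rw [h2]
  split_ifs with hmn
  · have := Polynomial.fwdDiff_iter_degree_eq_factorial p
    rw [hdeg, hmon, hmn] at this
    rw [this]; simp
  · have := Polynomial.fwdDiff_iter_eq_zero_of_degree_lt (P := p) (n := n) (by omega)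
    rw [this]; simp

lemma auxJ_jacobi (α β : ℝ) (hα : -1 < α) (hβ : -1 < β) (n m : ℕ) (hm : m ≤ n) :
    auxJ α β ((1 - Polynomial.X) ^ m * jacobiP α β n) =
      2⁻¹ ^ n * 2 ^ (α + β + m + n + 1) / Real.Gamma (α + β + m + n + 2) *
        (Real.Gamma (n + α + 1) * Real.Gamma (n + β + 1) / n.factorial) *
        (if m = n then (-1) ^ n * (n.factorial : ℝ) else 0) := by
  rw [← aux_fd α n m hm, jacobiP, Finset.mul_sum, Finset.mul_sum, auxJ_sum α β hα hβ]
  refine Finset.sum_congr rfl fun k hk => ?_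
  have hk : k ≤ n := by simpa [Nat.lt_succ_iff] using hk
  have hkn : (k : ℝ) ≤ n := by exact_mod_cast hk
  have hk0 : (0 : ℝ) ≤ k := by positivity
  rw [mul_assoc (Polynomial.C _), mul_left_comm, auxJ_C_mul, auxJ_basis α β hα hβ]
  rw [Nat.cast_sub hk, Nat.add_sub_cancel' hk, show α + β + m + k + (n - k : ℝ) = α + β + m + n by ring]
  have e := aux_gamma_desc (α + m + k) m (by linarith)
  rw [show α + m + k - m + 1 = α + k + 1 by ring] at e
  have g1 : Real.Gamma ((n : ℝ) - k + 1) = ((n - k).factorial : ℝ) := by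
    rw [← Nat.cast_sub hk, Real.Gamma_nat_eq_factorial]
  have p1 : Real.Gamma (α + k + 1) ≠ 0 := (Real.Gamma_pos_of_pos (by linarith)).ne'
  have p2 : Real.Gamma (β + (n - k) + 1) ≠ 0 := (Real.Gamma_pos_of_pos (by linarith)).ne'
  rw [e, g1, Real.Gamma_nat_eq_factorial, Nat.cast_choose ℝ hk,
    show (n : ℝ) - k + β + 1 = β + (n - k) + 1 by ring]
  have q1 := fun m : ℕ => (Nat.cast_ne_zero (R := ℝ)).2 (Nat.factorial_ne_zero m)
  have q2 := q1 n
  have q3 := q1 k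
  have q4 := q1 (n - k)
  field_simp

lemma aux_expand (α β : ℝ) (n : ℕ) : jacobiP α β n =
    ∑ m ∈ Finset.range (n + 1), Polynomial.C (auxT m (jacobiP α β n) * (-1) ^ m) *
      (1 - Polynomial.X) ^ m := by
  have hdeg : (jacobiP α β n).natDegree ≤ n := by
    rw [jacobiP]
    refine Polynomial.natDegree_sum_le_of_forall_le _ _ fun k hk => ?_
    have hk : k ≤ n := by simpa [Nat.lt_succ_iff] using hk
    have : n = 0 + k * 1 + (n - k) * 1 := by omega
    conv_rhs => rw [this]
    refine Polynomial.natDegree_mul_le_of_le (Polynomial.natDegree_mul_le_of_le ?_ ?_) ?_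
    · exact (Polynomial.natDegree_C _).le
    · refine Polynomial.natDegree_pow_le_of_le _ ?_
      compute_degree
    · refine Polynomial.natDegree_pow_le_of_le _ ?_
      compute_degree
  have h := Polynomial.sum_taylor_eq (jacobiP α β n) 1
  rw [Polynomial.sum_over_range' _ _ (n + 1) (by
    rw [Polynomial.natDegree_taylor]; omega)] at h
  · conv_lhs => rw [← h]
    refine Finset.sum_congr rfl fun m _ => ?_
    rw [Polynomial.C_mul, mul_assoc, auxT, map_pow, ← mul_pow]
    congr 2
    simp
  · simp

lemma aux_norm (α β : ℝ) (hα : -1 < α) (hβ : -1 < β) (n : ℕ) (hn : 1 ≤ n) :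
    jacobiNormSq α β n = 2 ^ (α + β + 1) / (2 * n + α + β + 1) *
      (Real.Gamma (n + α + 1) / Real.Gamma (n + 1)) *
      (Real.Gamma (n + β + 1) / Real.Gamma (n + α + β + 1)) := by
  have h0 : jacobiNormSq α β n = auxJ α β (jacobiP α β n * jacobiP α β n) := by
    rw [jacobiNormSq, auxJ]
    congr 1; ext x
    rw [Polynomial.eval_mul]; ring
  have hn' : (1 : ℝ) ≤ n := by exact_mod_cast hn
  rw [h0]
  conv_lhs => enter [3, 1]; rw [aux_expand]
  rw [Finset.sum_mul, auxJ_sum α β hα hβ, Finset.sum_range_succ, Finset.sum_eq_zero, zero_add]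
  · rw [mul_assoc, auxJ_C_mul, auxJ_jacobi α β hα hβ n n le_rfl, if_pos rfl,
      auxT_jacobi' α β hα hβ n n le_rfl hn]
    rw [Real.Gamma_nat_eq_factorial]
    have e : Real.Gamma (α + β + n + n + 2) = (2 * n + α + β + 1) * Real.Gamma (n + n + α + β + 1) := by
      rw [show α + β + n + n + 2 = (n + n + α + β + 1) + 1 by ring, Real.Gamma_add_one (by linarith)]
      ring
    have e2 : (2 : ℝ) ^ (α + β + n + n + 1) = 2 ^ (α + β + 1) * 2 ^ n * 2 ^ n := by
      rw [show α + β + n + n + 1 = (α + β + 1) + n + n by ring, Real.rpow_add (by norm_num),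
        Real.rpow_add (by norm_num), Real.rpow_natCast]
    rw [e, e2]
    have p1 : Real.Gamma (α + n + 1) ≠ 0 := (Real.Gamma_pos_of_pos (by linarith)).ne'
    have p2 : Real.Gamma (n + n + α + β + 1) ≠ 0 := (Real.Gamma_pos_of_pos (by linarith)).ne'
    have p3 : Real.Gamma (n + α + β + 1) ≠ 0 := (Real.Gamma_pos_of_pos (by linarith)).ne'
    have p4 : 2 * (n : ℝ) + α + β + 1 ≠ 0 := by linarith
    have q2 := (Nat.cast_ne_zero (R := ℝ)).2 (Nat.factorial_ne_zero n)
    have s1 : (-1 : ℝ) ^ n * (-1) ^ n = 1 := by rw [← mul_pow]; simp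
    rw [show (n : ℝ) + α + 1 = α + n + 1 by ring]
    simp only [Nat.sub_self, Nat.factorial_zero, Nat.cast_one, one_mul, inv_pow]
    generalize Real.Gamma (n + n + α + β + 1) = G1 at *
    generalize 2 * (n : ℝ) + α + β + 1 = d at *
    field_simp
    first | linear_combination s1 | linear_combination (Real.Gamma (n + β + 1)) * s1
  · intro m hm
    have hm : m < n := by simpa using hm
    rw [mul_assoc, auxJ_C_mul, auxJ_jacobi α β hα hβ n m hm.le, if_neg hm.ne]
    simp

lemma aux_gamma_asymp (s : ℝ) :
    Tendsto (fun n : ℕ => Real.Gamma (n + s + 1) / (n.factorial * (n : ℝ) ^ s)) atTop (nhds 1) := by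
  have hpos : ∀ s : ℝ, 0 < s →
      Tendsto (fun n : ℕ => Real.Gamma (n + s + 1) / (n.factorial * (n : ℝ) ^ s))
        atTop (nhds 1) := by
    intro s hs
    have hG := (Real.Gamma_pos_of_pos hs).ne'
    have h := (Real.GammaSeq_tendsto_Gamma s).inv₀ hG |>.const_mul (Real.Gamma s)
    rw [mul_inv_cancel₀ hG] at h
    refine h.congr fun n => ?_
    have hp : ∀ n : ℕ, Real.Gamma (n + s + 1) =
        (∏ j ∈ Finset.range (n + 1), (s + j)) * Real.Gamma s := by
      intro n
      induction n with
      | zero => simp [Real.Gamma_add_one hs.ne']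
      | succ n ih =>
        rw [Finset.prod_range_succ]
        push_cast
        rw [Real.Gamma_add_one (by positivity), show (n : ℝ) + 1 + s = n + s + 1 by ring, ih]
        ring
    rw [hp n, Real.GammaSeq, inv_div]
    ring
  have key : ∀ N : ℕ, ∀ s : ℝ, -(N : ℝ) < s →
      Tendsto (fun n : ℕ => Real.Gamma (n + s + 1) / (n.factorial * (n : ℝ) ^ s))
        atTop (nhds 1) := by
    intro N
    induction N with
    | zero => intro s hs; exact hpos s (by simpa using hs)
    | succ N ih =>
      intro s hs
      have h := ih (s + 1) (by push_cast at hs; linarith)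
      have h2 : Tendsto (fun n : ℕ => ((1 : ℝ) + (s + 1) * (n : ℝ)⁻¹)⁻¹) atTop (nhds 1) := by
        have := ((tendsto_inv_atTop_nhds_zero_nat (𝕜 := ℝ)).const_mul (s + 1)).const_add 1
        have := this.inv₀ (by simp)
        simpa using this
      have h3 := h.mul h2
      rw [one_mul] at h3
      refine h3.congr' ?_
      obtain ⟨N0, hN0⟩ := exists_nat_gt (|s| + 1)
      filter_upwards [eventually_ge_atTop (N0 + 1)] with n hn
      have hn1 : (N0 : ℝ) + 1 ≤ n := by exact_mod_cast hn
      have hs1 := neg_abs_le s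
      have hs0 := abs_nonneg s
      have hn0 : (0 : ℝ) < n := by linarith
      have hd : (n : ℝ) + s + 1 ≠ 0 := by linarith
      rw [show (n : ℝ) + (s + 1) + 1 = (n + s + 1) + 1 by ring, Real.Gamma_add_one hd,
        Real.rpow_add_one hn0.ne']
      have hd2 : (1 : ℝ) + (s + 1) * (n : ℝ)⁻¹ = (n + s + 1) / n := by
        field_simp; ring
      rw [hd2, inv_div]
      have := (Real.rpow_pos_of_pos hn0 s).ne'
      generalize (n : ℝ) + s + 1 = d at *
      field_simp
  obtain ⟨N, hN⟩ := exists_nat_gt (-s)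
  exact key N s (by linarith)

lemma aux_gamma_ratio (a b : ℝ) :
    Tendsto (fun n : ℕ => Real.Gamma (n + a) / Real.Gamma (n + b) * (n : ℝ) ^ (b - a))
      atTop (nhds 1) := by
  have h := (aux_gamma_asymp (a - 1)).div (aux_gamma_asymp (b - 1)) one_ne_zero
  rw [div_one] at h
  refine h.congr' ?_
  filter_upwards [eventually_gt_atTop 0] with n hn
  have hn0 : (0 : ℝ) < n := by exact_mod_cast hn
  simp only [Pi.div_apply]
  rw [show (n : ℝ) + (a - 1) + 1 = n + a by ring, show (n : ℝ) + (b - 1) + 1 = n + b by ring,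
    show b - a = (b - 1) - (a - 1) by ring, Real.rpow_sub hn0 (b - 1) (a - 1)]
  have := (Real.rpow_pos_of_pos hn0 (a - 1)).ne'
  have := (Real.rpow_pos_of_pos hn0 (b - 1)).ne'
  have q2 := (Nat.cast_ne_zero (R := ℝ)).2 (Nat.factorial_ne_zero n)
  generalize (n : ℝ) ^ (a - 1) = x at *
  generalize (n : ℝ) ^ (b - 1) = y at *
  field_simp

/-- limit of the scaled Taylor coefficient -/
noncomputable def auxE (α : ℝ) (k : ℕ) : ℝ := 2⁻¹ ^ k / (Real.Gamma (α + k + 1) * k.factorial)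

lemma auxE_pos (α : ℝ) (hα : -1 < α) (k : ℕ) : 0 < auxE α k := by
  have h2 : 0 < Real.Gamma (α + k + 1) := Real.Gamma_pos_of_pos (by
    have : (0 : ℝ) ≤ k := by positivity
    linarith)
  rw [auxE]; positivity

lemma auxT_asymp (α β : ℝ) (hα : -1 < α) (hβ : -1 < β) (k : ℕ) :
    Tendsto (fun n : ℕ => auxT k (jacobiP α β n) / (n : ℝ) ^ (α + 2 * k)) atTop
      (nhds (auxE α k)) := by
  have h1 := aux_gamma_ratio (α + 1) (-k + 1)
  have h2 := aux_gamma_ratio (k + α + β + 1) (α + β + 1)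
  have h := (h1.mul h2).const_mul (auxE α k)
  rw [mul_one, mul_one] at h
  refine h.congr' ?_
  filter_upwards [eventually_ge_atTop (k + 1)] with n hn
  have hn0 : (0 : ℝ) < n := by exact_mod_cast (by omega : 0 < n)
  rw [auxT_jacobi' α β hα hβ n k (by omega) (by omega), auxE]
  have g1 : Real.Gamma ((n : ℝ) + (-k + 1)) = ((n - k).factorial : ℝ) := by
    rw [← Real.Gamma_nat_eq_factorial, Nat.cast_sub (by omega)]
    congr 1; ring
  rw [g1, show (-k + 1 - (α + 1) : ℝ) = -(α + k) by ring,
    show α + β + 1 - (k + α + β + 1) = -(k : ℝ) by ring, Real.rpow_neg hn0.le,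
    Real.rpow_neg hn0.le, show α + 2 * k = (α + k) + (k : ℝ) by ring, Real.rpow_add hn0 (α + k) k,
    show (n : ℝ) + (α + 1) = n + α + 1 by ring,
    show (n : ℝ) + (k + α + β + 1) = n + k + α + β + 1 by ring,
    show (n : ℝ) + (α + β + 1) = n + α + β + 1 by ring]
  ring

lemma aux_norm_asymp (α β : ℝ) (hα : -1 < α) (hβ : -1 < β) :
    Tendsto (fun n : ℕ => jacobiNormSq α β n * n) atTop (nhds (2 ^ (α + β))) := by
  have h1 := aux_gamma_ratio (α + 1) 1
  have h2 := aux_gamma_ratio (β + 1) (α + β + 1)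
  have h3 : Tendsto (fun n : ℕ => ((2 : ℝ) + (α + β + 1) * (n : ℝ)⁻¹)⁻¹) atTop (nhds 2⁻¹) := by
    have := ((tendsto_inv_atTop_nhds_zero_nat (𝕜 := ℝ)).const_mul (α + β + 1)).const_add 2
    have := this.inv₀ (by simp)
    simpa using this
  have h := ((h1.mul h2).mul h3).const_mul ((2 : ℝ) ^ (α + β + 1))
  rw [Real.rpow_add_one (by norm_num), show (2 : ℝ) ^ (α + β) * 2 * (1 * 1 * 2⁻¹) = 2 ^ (α + β) by ring] at h
  refine h.congr' ?_
  filter_upwards [eventually_ge_atTop 1] with n hn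
  have hn1 : (1 : ℝ) ≤ n := by exact_mod_cast hn
  have hn0 : (0 : ℝ) < n := by linarith
  rw [aux_norm α β hα hβ n hn, show (1 : ℝ) - (α + 1) = -α by ring,
    show α + β + 1 - (β + 1) = α by ring, Real.rpow_neg hn0.le,
    show (n : ℝ) + (α + 1) = n + α + 1 by ring, show (n : ℝ) + (β + 1) = n + β + 1 by ring,
    show (n : ℝ) + (α + β + 1) = n + α + β + 1 by ring,
    show (2 : ℝ) + (α + β + 1) * (n : ℝ)⁻¹ = (2 * n + α + β + 1) / n by field_simp; ring,
    inv_div, Real.rpow_add_one (by norm_num)]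
  have := (Real.rpow_pos_of_pos hn0 α).ne'
  have hd : (2 * n + α + β + 1) ≠ 0 := by linarith
  generalize 2 * (n : ℝ) + α + β + 1 = d at *
  generalize Real.Gamma (n + α + 1) = g1 at *
  generalize Real.Gamma (n + β + 1) = g2 at *
  generalize Real.Gamma (n + α + β + 1) = g3 at *
  generalize (n : ℝ) ^ α = g4 at *
  field_simp

lemma aux_stolz (a : ℕ → ℝ) (p c : ℝ) (hp : -1 < p)
    (h : Tendsto (fun n : ℕ => a n / (n : ℝ) ^ p) atTop (nhds c)) :
    Tendsto (fun n : ℕ => (∑ i ∈ Finset.range n, a i) / (n : ℝ) ^ (p + 1)) atTop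
      (nhds (c / (p + 1))) := by
  set q := p + 1 with hq
  have hq0 : 0 < q := by linarith
  set g : ℕ → ℝ := fun i => ((i + 1 : ℕ) : ℝ) ^ q - (i : ℝ) ^ q with hg
  have hgpos : ∀ i, 0 < g i := by
    intro i
    simp only [hg, sub_pos]
    exact Real.rpow_lt_rpow (by positivity) (by push_cast; linarith) hq0
  have hsum : ∀ n : ℕ, ∑ i ∈ Finset.range n, g i = (n : ℝ) ^ q := by
    intro n
    rw [hg, Finset.sum_range_sub (fun i : ℕ => (i : ℝ) ^ q)]
    simp [Real.zero_rpow hq0.ne']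
  have hinf : Tendsto (fun n : ℕ => (n : ℝ) ^ q) atTop atTop :=
    (tendsto_rpow_atTop hq0).comp tendsto_natCast_atTop_atTop
  have hlim : Tendsto (fun n : ℕ => g n / (n : ℝ) ^ p) atTop (nhds q) := by
    have hd : HasDerivAt (fun x : ℝ => x ^ q) q 1 := by
      have := Real.hasDerivAt_rpow_const (x := 1) (p := q) (Or.inl one_ne_zero)
      simpa using this
    have ht : Tendsto (fun n : ℕ => (n : ℝ)⁻¹) atTop (nhdsWithin 0 {0}ᶜ) := by
      rw [tendsto_nhdsWithin_iff]
      refine ⟨tendsto_inv_atTop_nhds_zero_nat, ?_⟩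
      filter_upwards [eventually_gt_atTop 0] with n hn
      simp; omega
    refine (hd.tendsto_slope_zero.comp ht).congr' ?_
    filter_upwards [eventually_gt_atTop 0] with n hn
    have hn0 : (0 : ℝ) < n := by exact_mod_cast hn
    simp only [Function.comp, inv_inv, smul_eq_mul, Real.one_rpow, hg]
    push_cast
    rw [show (n : ℝ) + 1 = n * (1 + (n : ℝ)⁻¹) by field_simp,
      Real.mul_rpow hn0.le (by positivity), hq, Real.rpow_add_one hn0.ne']
    have := (Real.rpow_pos_of_pos hn0 p).ne'
    field_simp
  have ho : (fun n => a n - c / q * g n) =o[atTop] g := by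
    rw [Asymptotics.isLittleO_iff_tendsto' (Eventually.of_forall fun n h => absurd h (hgpos n).ne')]
    have h5 := (h.div hlim hq0.ne').sub_const (c / q)
    rw [sub_self] at h5
    refine h5.congr' ?_
    filter_upwards [eventually_gt_atTop 0] with n hn
    have hn0 : (0 : ℝ) < n := by exact_mod_cast hn
    have := (Real.rpow_pos_of_pos hn0 p).ne'
    have := (hgpos n).ne'
    simp only [Pi.div_apply]
    field_simp
  have hs := ho.sum_range (fun i => (hgpos i).le) (by simpa only [hsum] using hinf)
  simp only [hsum] at hs
  have h6 := (hs.tendsto_div_nhds_zero).add_const (c / q)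
  rw [zero_add] at h6
  refine h6.congr' ?_
  filter_upwards [eventually_gt_atTop 0] with n hn
  have hn0 : (0 : ℝ) < n := by exact_mod_cast hn
  have := (Real.rpow_pos_of_pos hn0 q).ne'
  rw [Finset.sum_sub_distrib, ← Finset.mul_sum, hsum]
  field_simp
  ring

lemma aux_ratio (M γ δ B : ℝ) (hM : 0 < M) (hB : 0 < B) (Ms Bn : ℕ → ℝ)
    (hlim : Tendsto (fun n : ℕ => Ms n * (n : ℝ) ^ γ) atTop (nhds M))
    (hBn : Tendsto Bn atTop (nhds B)) :
    ∃ L, Tendsto (fun n : ℕ => (Ms n * (n : ℝ) ^ δ) / (1 + (Ms n * (n : ℝ) ^ δ) * Bn n))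
      atTop (nhds L) := by
  have hu : (fun n : ℕ => Ms n * (n : ℝ) ^ δ) =ᶠ[atTop]
      fun n : ℕ => (Ms n * (n : ℝ) ^ γ) * (n : ℝ) ^ (δ - γ) := by
    filter_upwards [eventually_gt_atTop 0] with n hn
    have hn0 : (0 : ℝ) < n := by exact_mod_cast hn
    rw [mul_assoc, ← Real.rpow_add hn0]
    congr 2; ring
  have fin : ∀ l : ℝ, 0 ≤ l → Tendsto (fun n : ℕ => Ms n * (n : ℝ) ^ δ) atTop (nhds l) →
      ∃ L, Tendsto (fun n : ℕ => (Ms n * (n : ℝ) ^ δ) / (1 + (Ms n * (n : ℝ) ^ δ) * Bn n))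
      atTop (nhds L) := by
    intro l hl h
    exact ⟨_, h.div ((h.mul hBn).const_add 1) (by positivity)⟩
  rcases lt_trichotomy (δ - γ) 0 with h | h | h
  · apply fin 0 le_rfl
    have h1 : Tendsto (fun n : ℕ => (n : ℝ) ^ (δ - γ)) atTop (nhds 0) := by
      have := (tendsto_rpow_neg_atTop (y := -(δ - γ)) (by linarith)).comp tendsto_natCast_atTop_atTop
      simpa [Function.comp_def] using this
    have h2 := hlim.mul h1
    rw [mul_zero] at h2
    exact h2.congr' hu.symm
  · apply fin M hM.le
    refine hlim.congr' ?_
    filter_upwards [hu] with n hn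
    rw [hn, h]; simp
  · have h1 : Tendsto (fun n : ℕ => (n : ℝ) ^ (δ - γ)) atTop atTop :=
      (tendsto_rpow_atTop h).comp tendsto_natCast_atTop_atTop
    have h2 := (hlim.pos_mul_atTop hM h1).congr' hu.symm
    have h3 := (h2.inv_tendsto_atTop.add hBn).inv₀ (by simpa using hB.ne')
    refine ⟨_, h3.congr' ?_⟩
    filter_upwards [h2.eventually_gt_atTop 0] with n hn
    simp only [Pi.inv_apply]
    generalize Ms n * (n : ℝ) ^ δ = u at *
    rw [show 1 + u * Bn n = u * (u⁻¹ + Bn n) by field_simp, div_mul_eq_div_div, div_self hn.ne',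
      one_div]

lemma auxT_rhs (α β : ℝ) (j n k : ℕ) (b : ℕ → ℝ) (hk : k ≤ j + 1) :
    auxT k (∑ i ∈ Finset.range (j + 2),
      Polynomial.C (b i) * (1 - Polynomial.X) ^ i * jacobiP (α + 2 * i) β (n - i)) =
    ∑ i ∈ Finset.range (k + 1),
      b i * ((-1) ^ i * auxT (k - i) (jacobiP (α + 2 * i) β (n - i))) := by
  rw [auxT_sum, ← Finset.sum_subset (Finset.range_mono (show k + 1 ≤ j + 2 by omega))]
  · refine Finset.sum_congr rfl fun i hi => ?_
    have hi : i ≤ k := by simpa [Nat.lt_succ_iff] using hi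
    rw [mul_assoc, auxT_C_mul, auxT_one_sub_pow, if_pos hi]
  · intro i _ hi
    have hi : ¬ i ≤ k := by simpa [Nat.lt_succ_iff] using hi
    rw [mul_assoc, auxT_C_mul, auxT_one_sub_pow, if_neg hi, mul_zero]

/-- The kernel sums in terms of Taylor coefficients. -/
noncomputable def auxS (α β : ℝ) (j k n : ℕ) : ℝ :=
  ∑ i ∈ Finset.range n, auxT j (jacobiP α β i) * auxT k (jacobiP α β i) / jacobiNormSq α β i

lemma auxS_asymp (α β : ℝ) (hα : -1 < α) (hβ : -1 < β) (j k : ℕ) :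
    Tendsto (fun n : ℕ => auxS α β j k n / (n : ℝ) ^ (2 * α + 2 * j + 2 * k + 2)) atTop
      (nhds (auxE α j * auxE α k / 2 ^ (α + β) / (2 * α + 2 * j + 2 * k + 2))) := by
  have hp : (-1 : ℝ) < 2 * α + 2 * j + 2 * k + 1 := by
    have : (0 : ℝ) ≤ j := by positivity
    have : (0 : ℝ) ≤ k := by positivity
    linarith
  have h := aux_stolz
    (fun i => auxT j (jacobiP α β i) * auxT k (jacobiP α β i) / jacobiNormSq α β i)
    (2 * α + 2 * j + 2 * k + 1) (auxE α j * auxE α k / 2 ^ (α + β)) hp ?_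
  · rw [show 2 * α + 2 * j + 2 * k + 1 + 1 = 2 * α + 2 * j + 2 * k + 2 by ring] at h
    exact h
  · have h1 := ((auxT_asymp α β hα hβ j).mul (auxT_asymp α β hα hβ k)).div
      (aux_norm_asymp α β hα hβ) (Real.rpow_pos_of_pos (by norm_num) _).ne'
    refine h1.congr' ?_
    filter_upwards [eventually_gt_atTop 0] with n hn
    have hn0 : (0 : ℝ) < n := by exact_mod_cast hn
    simp only [Pi.div_apply]
    rw [show 2 * α + 2 * j + 2 * k + 1 = (α + 2 * j) + (α + 2 * k) + 1 by ring,
      Real.rpow_add_one hn0.ne', Real.rpow_add hn0 (α + 2 * j) (α + 2 * k)]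
    have := (Real.rpow_pos_of_pos hn0 (α + 2 * j)).ne'
    have := (Real.rpow_pos_of_pos hn0 (α + 2 * k)).ne'
    field_simp

lemma auxT_sobQ (α β : ℝ) (j : ℕ) (Ms : ℕ → ℝ) (n k : ℕ) (hn : 1 ≤ n) :
    auxT k (sobQ α β j Ms n) = auxT k (jacobiP α β n) -
      Ms n * (j.factorial * auxT j (jacobiP α β n)) /
        (1 + Ms n * ((j.factorial : ℝ) ^ 2 * auxS α β j j n)) *
        (j.factorial * auxS α β j k n) := by
  have h1 : kernK α β j j (n - 1) 1 1 = (j.factorial : ℝ) ^ 2 * auxS α β j j n := by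
    rw [kernK, auxS, Nat.sub_add_cancel hn, Finset.mul_sum]
    refine Finset.sum_congr rfl fun i _ => ?_
    rw [auxT_deriv]; ring
  have h2 : auxT k (kernKPoly α β j (n - 1)) = j.factorial * auxS α β j k n := by
    rw [kernKPoly, auxS, Nat.sub_add_cancel hn, Finset.mul_sum, auxT_sum]
    refine Finset.sum_congr rfl fun i _ => ?_
    rw [auxT_C_mul, auxT_deriv]; ring
  rw [sobQ, auxT_sub, auxT_C_mul, h1, h2, auxT_deriv]

lemma aux_sobQ_conv (α β : ℝ) (hα : -1 < α) (hβ : -1 < β)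
    (j : ℕ) (γ M : ℝ) (hM : 0 < M) (Ms : ℕ → ℝ)
    (hlim : Tendsto (fun n : ℕ => Ms n * (n : ℝ) ^ γ) atTop (nhds M)) (k : ℕ) :
    ∃ L : ℝ, Tendsto (fun n : ℕ => auxT k (sobQ α β j Ms n) / (n : ℝ) ^ (α + 2 * k)) atTop
      (nhds L) := by
  have hB := (auxS_asymp α β hα hβ j j).const_mul ((j.factorial : ℝ) ^ 2)
  have hpos : 0 < (j.factorial : ℝ) ^ 2 *
      (auxE α j * auxE α j / 2 ^ (α + β) / (2 * α + 2 * j + 2 * j + 2)) := by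
    have := auxE_pos α hα j
    have h2 : (0 : ℝ) < 2 ^ (α + β) := Real.rpow_pos_of_pos (by norm_num) _
    have h3 : (0 : ℝ) < 2 * α + 2 * j + 2 * j + 2 := by
      have : (0 : ℝ) ≤ j := by positivity
      linarith
    positivity
  obtain ⟨R, hR⟩ := aux_ratio M γ (2 * α + 2 * j + 2 * j + 2) _ hM hpos Ms _ hlim hB
  have hS := auxS_asymp α β hα hβ j k
  have h := (auxT_asymp α β hα hβ k).sub
    ((((auxT_asymp α β hα hβ j).mul hS).mul hR).const_mul ((j.factorial : ℝ) ^ 2))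
  refine ⟨_, h.congr' ?_⟩
  filter_upwards [eventually_ge_atTop 1] with n hn
  have hn0 : (0 : ℝ) < n := by exact_mod_cast hn
  rw [auxT_sobQ α β j Ms n k hn]
  have x1 := (Real.rpow_pos_of_pos hn0 (α + 2 * j)).ne'
  have x2 := (Real.rpow_pos_of_pos hn0 (α + 2 * k)).ne'
  have x3 := (Real.rpow_pos_of_pos hn0 (2 * α + 2 * j + 2 * j + 2)).ne'
  have x4 := (Real.rpow_pos_of_pos hn0 (2 * α + 2 * j + 2 * k + 2)).ne'
  have e : (n : ℝ) ^ (2 * α + 2 * j + 2 * j + 2) * (n : ℝ) ^ (α + 2 * k) =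
      (n : ℝ) ^ (2 * α + 2 * j + 2 * k + 2) * (n : ℝ) ^ (α + 2 * j) := by
    rw [← Real.rpow_add hn0, ← Real.rpow_add hn0]
    congr 1; ring
  generalize (n : ℝ) ^ (α + 2 * j) = y1 at *
  generalize (n : ℝ) ^ (α + 2 * k) = y2 at *
  generalize (n : ℝ) ^ (2 * α + 2 * j + 2 * j + 2) = y3 at *
  generalize (n : ℝ) ^ (2 * α + 2 * j + 2 * k + 2) = y4 at *
  rw [show Ms n * y3 * ((j.factorial : ℝ) ^ 2 * (auxS α β j j n / y3)) =
    Ms n * ((j.factorial : ℝ) ^ 2 * auxS α β j j n) by field_simp]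
  generalize (1 + Ms n * ((j.factorial : ℝ) ^ 2 * auxS α β j j n))⁻¹ = D' at *
  have e' : y3 = y4 * y1 / y2 := by rw [eq_div_iff x2]; exact e
  rw [e', sub_div]
  field_simp

lemma auxT_asymp_shift (α β : ℝ) (hα : -1 < α) (hβ : -1 < β) (k i : ℕ) :
    Tendsto (fun n : ℕ => auxT k (jacobiP α β (n - i)) / (n : ℝ) ^ (α + 2 * k)) atTop
      (nhds (auxE α k)) := by
  have h := (auxT_asymp α β hα hβ k).comp (tendsto_sub_atTop_nat i)
  have h1 : Tendsto (fun n : ℕ => ((n - i : ℕ) : ℝ) / n) atTop (nhds 1) := by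
    have := ((tendsto_inv_atTop_nhds_zero_nat (𝕜 := ℝ)).const_mul (i : ℝ)).const_sub 1
    rw [mul_zero, sub_zero] at this
    refine this.congr' ?_
    filter_upwards [eventually_ge_atTop (i + 1)] with n hn
    have hn0 : (0 : ℝ) < n := by exact_mod_cast (by omega : 0 < n)
    rw [Nat.cast_sub (by omega)]
    field_simp
  have h2 := h1.rpow_const (p := α + 2 * k) (Or.inl one_ne_zero)
  rw [Real.one_rpow] at h2
  have h3 := h.mul h2
  rw [mul_one] at h3
  refine h3.congr' ?_
  filter_upwards [eventually_ge_atTop (i + 1)] with n hn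
  have hn0 : (0 : ℝ) < n := by exact_mod_cast (by omega : 0 < n)
  have hn1 : (0 : ℝ) < (n - i : ℕ) := by exact_mod_cast (by omega : 0 < n - i)
  simp only [Function.comp]
  rw [Real.div_rpow hn1.le hn0.le]
  have := (Real.rpow_pos_of_pos hn1 (α + 2 * k)).ne'
  have := (Real.rpow_pos_of_pos hn0 (α + 2 * k)).ne'
  field_simp

lemma aux_coeff_asymp (α β : ℝ) (hα : -1 < α) (hβ : -1 < β) (k i : ℕ) (hi : i ≤ k) :
    Tendsto (fun n : ℕ => ((-1) ^ i * auxT (k - i) (jacobiP (α + 2 * i) β (n - i))) /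
      (n : ℝ) ^ (α + 2 * k)) atTop (nhds ((-1) ^ i * auxE (α + 2 * i) (k - i))) := by
  have h := (auxT_asymp_shift (α + 2 * i) β
    (by have : (0 : ℝ) ≤ i := by positivity
        linarith) hβ (k - i) i).const_mul ((-1 : ℝ) ^ i)
  refine h.congr fun n => ?_
  rw [Nat.cast_sub hi, show α + 2 * i + 2 * (k - i : ℝ) = α + 2 * k by ring, mul_div_assoc]
/-- the coefficients `b_i(n)` in the connection formula are unique and,
for each `i ∈ {0,…,j+1}`, convergent as `n → ∞`. -/
theorem sobQ_connection_coeffs_unique_and_convergent (α β : ℝ) (hα : -1 < α) (hβ : -1 < β)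
    (j : ℕ) (γ M : ℝ) (hM : 0 < M) (Ms : ℕ → ℝ) (hMs : ∀ n, 0 ≤ Ms n)
    (hlim : Filter.Tendsto (fun n : ℕ => Ms n * (n : ℝ) ^ γ) Filter.atTop (nhds M)) :
    (∀ n, j + 1 ≤ n → ∀ b b' : ℕ → ℝ,
      sobQ α β j Ms n =
        (∑ i ∈ Finset.range (j + 2),
          Polynomial.C (b i) * (1 - Polynomial.X) ^ i * jacobiP (α + 2 * i) β (n - i)) →
      sobQ α β j Ms n =
        (∑ i ∈ Finset.range (j + 2),
          Polynomial.C (b' i) * (1 - Polynomial.X) ^ i * jacobiP (α + 2 * i) β (n - i)) →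
      ∀ i, i ≤ j + 1 → b i = b' i) ∧
    ∀ b : ℕ → ℕ → ℝ,
      (∀ n, j + 1 ≤ n →
        sobQ α β j Ms n =
          ∑ i ∈ Finset.range (j + 2),
            Polynomial.C (b n i) * (1 - Polynomial.X) ^ i * jacobiP (α + 2 * i) β (n - i)) →
      ∀ i, i ≤ j + 1 →
        ∃ L : ℝ, Filter.Tendsto (fun n : ℕ => b n i) Filter.atTop (nhds L) := by
  have hpar : ∀ i : ℕ, -1 < α + 2 * (i : ℝ) := fun i => by
    have : (0 : ℝ) ≤ i := by positivity
    linarith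

  constructor
  · intro n _ b b' hb hb' i
    induction i using Nat.strong_induction_on with
    | _ i ih =>
      intro hi
      have h := congrArg (auxT i) (hb.symm.trans hb')
      rw [auxT_rhs α β j n i b hi, auxT_rhs α β j n i b' hi, Finset.sum_range_succ,
        Finset.sum_range_succ] at h
      have h2 : ∑ x ∈ Finset.range i,
            b x * ((-1) ^ x * auxT (i - x) (jacobiP (α + 2 * x) β (n - x))) =
          ∑ x ∈ Finset.range i,
            b' x * ((-1) ^ x * auxT (i - x) (jacobiP (α + 2 * x) β (n - x))) := by
        refine Finset.sum_congr rfl fun x hx => ?_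
        have hx : x < i := by simpa using hx
        rw [ih x hx (by omega)]
      rw [h2, Nat.sub_self] at h
      have h3 := add_left_cancel h
      have hne : ((-1 : ℝ) ^ i * auxT 0 (jacobiP (α + 2 * i) β (n - i))) ≠ 0 :=
        mul_ne_zero (pow_ne_zero _ (by norm_num)) (auxT_zero_pos _ β (hpar i) hβ _).ne'
      exact mul_right_cancel₀ hne h3
  · intro b hb i
    induction i using Nat.strong_induction_on with
    | _ i ih =>
      intro hi
      obtain ⟨Lq, hLq⟩ := aux_sobQ_conv α β hα hβ j γ M hM Ms hlim i
      have hsum : ∃ S : ℝ, Tendsto (fun n : ℕ => ∑ x ∈ Finset.range i,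
          b n x * (((-1) ^ x * auxT (i - x) (jacobiP (α + 2 * x) β (n - x))) /
            (n : ℝ) ^ (α + 2 * i))) atTop (nhds S) := by
        have ih' : ∀ x, ∃ L : ℝ, x < i → Tendsto (fun n : ℕ => b n x) atTop (nhds L) := by
          intro x
          by_cases hx : x < i
          · obtain ⟨L, hL⟩ := ih x hx (by omega)
            exact ⟨L, fun _ => hL⟩
          · exact ⟨0, fun h => absurd h hx⟩
        choose L hL using ih'
        refine ⟨_, tendsto_finsetSum
          (a := fun x => L x * ((-1) ^ x * auxE (α + 2 * x) (i - x))) _ fun x hx => ?_⟩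
        · have hx : x < i := by simpa using hx
          exact (hL x hx).mul (aux_coeff_asymp α β hα hβ i x hx.le)
      obtain ⟨S, hS⟩ := hsum
      have hd := aux_coeff_asymp α β hα hβ i i le_rfl
      have hne : ((-1 : ℝ) ^ i * auxE (α + 2 * i) (i - i)) ≠ 0 :=
        mul_ne_zero (pow_ne_zero _ (by norm_num)) (auxE_pos _ (hpar i) _).ne'
      refine ⟨_, ((hLq.sub hS).div hd hne).congr' ?_⟩
      filter_upwards [eventually_ge_atTop (j + 1)] with n hn
      have hn0 : (0 : ℝ) < n := by exact_mod_cast (by omega : 0 < n)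
      have h := congrArg (auxT i) (hb n hn)
      rw [auxT_rhs α β j n i (b n) hi, Finset.sum_range_succ] at h
      have hne2 : ((-1 : ℝ) ^ i * auxT (i - i) (jacobiP (α + 2 * i) β (n - i))) ≠ 0 := by
        rw [Nat.sub_self]
        exact mul_ne_zero (pow_ne_zero _ (by norm_num)) (auxT_zero_pos _ β (hpar i) hβ _).ne'
      have x1 := (Real.rpow_pos_of_pos hn0 (α + 2 * i)).ne'
      simp only [Pi.div_apply]
      rw [div_eq_iff (div_ne_zero hne2 x1), h]
      simp only [← mul_div_assoc]
      rw [← Finset.sum_div]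
      ring
end
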